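/- arXiv:1205.5424 — 2 statements merged into one kernel-verified Lean document; each statement's English description precedes it below -/
import Mathlib

section
/- (Restricted-sum expansion of the Tutte polynomial, realizable case.) For every vector configuration v : Fin n → V and all real numbers x, y: t(x, y) = ∑_{A ⊆ Fin n with θ̄*(A) = 0 and θ̄(A) = 0} x^{θ*(A)} y^{θ(A)}. -/
open Set Submodule

/-- The reorientation of the vector configuration `v` on the subset `A`:
vectors indexed by `A` are negated. -/
def reorient {n : ℕ} {V : Type*} [AddCommGroup V] (v : Fin n → V) (A : Finset (Fin n)) :
    Fin n → V :=
  fun i => if i ∈ A then -v i else v i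

/-- `a` is orientation-active for the configuration `w`: it is the smallest element of a
positive circuit, i.e. there is a nonnegative linear dependence with positive coefficient
at `a` and zero coefficients below `a`. -/
def OActive {n : ℕ} {V : Type*} [AddCommGroup V] [Module ℝ V]
    (w : Fin n → V) (a : Fin n) : Prop :=
  ∃ c : Fin n → ℝ, (∀ i, 0 ≤ c i) ∧ (∑ i, c i • w i) = 0 ∧ 0 < c a ∧ ∀ i < a, c i = 0

/-- `a` is dually orientation-active for the configuration `w`: it is the smallest element of
a positive cocircuit, i.e. there is a linear functional, nonnegative on the configuration,
positive at `w a` and vanishing on the vectors below `a`. -/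
def ODualActive {n : ℕ} {V : Type*} [AddCommGroup V] [Module ℝ V]
    (w : Fin n → V) (a : Fin n) : Prop :=
  ∃ f : V →ₗ[ℝ] ℝ, (∀ i, 0 ≤ f (w i)) ∧ 0 < f (w a) ∧ ∀ i < a, f (w i) = 0

/-- `θ*(A)`: the number of elements outside `A` that are dually orientation-active for `v_A`. -/
noncomputable def thetaStar {n : ℕ} {V : Type*} [AddCommGroup V] [Module ℝ V]
    (v : Fin n → V) (A : Finset (Fin n)) : ℕ :=
  {a : Fin n | a ∉ A ∧ ODualActive (reorient v A) a}.ncard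

/-- `θ̄*(A)`: the number of elements of `A` that are dually orientation-active for `v_A`. -/
noncomputable def thetaStarBar {n : ℕ} {V : Type*} [AddCommGroup V] [Module ℝ V]
    (v : Fin n → V) (A : Finset (Fin n)) : ℕ :=
  {a : Fin n | a ∈ A ∧ ODualActive (reorient v A) a}.ncard

/-- `θ(A)`: the number of elements outside `A` that are orientation-active for `v_A`. -/
noncomputable def theta {n : ℕ} {V : Type*} [AddCommGroup V] [Module ℝ V]
    (v : Fin n → V) (A : Finset (Fin n)) : ℕ :=
  {a : Fin n | a ∉ A ∧ OActive (reorient v A) a}.ncard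

/-- `θ̄(A)`: the number of elements of `A` that are orientation-active for `v_A`. -/
noncomputable def thetaBar {n : ℕ} {V : Type*} [AddCommGroup V] [Module ℝ V]
    (v : Fin n → V) (A : Finset (Fin n)) : ℕ :=
  {a : Fin n | a ∈ A ∧ OActive (reorient v A) a}.ncard

/-- The rank of a set of indices: the dimension of the span of the corresponding vectors. -/
noncomputable def vrank {n : ℕ} {V : Type*} [AddCommGroup V] [Module ℝ V]
    (v : Fin n → V) (S : Set (Fin n)) : ℕ :=
  Module.finrank ℝ ↥(span ℝ (v '' S))

/-- The Tutte polynomial of the matroid realized by the configuration `v`: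
`t(x,y) = ∑_{A ⊆ Fin n} (x-1)^(r(E) - r(A)) * (y-1)^(|A| - r(A))`. -/
noncomputable def tutteV {n : ℕ} {V : Type*} [AddCommGroup V] [Module ℝ V]
    (v : Fin n → V) (x y : ℝ) : ℝ :=
  ∑ A : Finset (Fin n),
    (x - 1) ^ (vrank v Set.univ - vrank v ↑A) * (y - 1) ^ (A.card - vrank v ↑A)

/-!
The idea is to mark all four activities at once: the identity
`t(x + u, y + z) = ∑ A, x^θ*(A) u^θ̄*(A) y^θ(A) z^θ̄(A)` contains the theorem as the case
`u = z = 0`, and both of its sides obey the same recurrence when the last vector `q` is removed from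
the configuration.

If `q` is a loop or a coloop, then it is active, or dually active, for both of its signs, which
contributes the factor `y + z` or `x + u`. Otherwise the activities of an extension by `q` or by
`-q` are read off from the linear dependences and from the values of linear functionals by
prescribing the sign of the coordinate at `q`; forcing this coordinate to vanish or forgetting it
gives the activities of the deletion and of the contraction. Dependences and value vectors are
orthogonal, and this forces one of `q`, `-q` to have exactly the activities of the deletion and the
other one exactly those of the contraction, so that the two terms add up as in the
deletion-contraction recurrence of the Tutte polynomial.
-/

section LeadingIndices

section Preorder

variable {R ι : Type*} [CommRing R] [Preorder R] [Preorder ι]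

/-- `c` is a nonnegative vector whose first nonzero coordinate is the one at `a`. -/
def IsLeading (c : ι → R) (a : ι) : Prop :=
  (∀ i, 0 ≤ c i) ∧ 0 < c a ∧ ∀ i < a, c i = 0

/-- The leading indices of the nonnegative vectors `c` such that `(c, s) ∈ L` for some `s ∈ S`.
The set `S` encodes how the last coordinate is treated: `{0}` forces it to vanish, `univ` forgets
it, and `Ici 0`, `Iic 0` prescribe its sign. -/
def leadingIndices (L : Submodule R ((ι → R) × R)) (S : Set R) : Set ι :=
  {a | ∃ p ∈ L, p.2 ∈ S ∧ IsLeading p.1 a}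

variable {L : Submodule R ((ι → R) × R)} {S T : Set R}

lemma leadingIndices_mono (h : S ⊆ T) : leadingIndices L S ⊆ leadingIndices L T :=
  fun _ ⟨p, hp, hS, hpa⟩ => ⟨p, hp, h hS, hpa⟩

lemma leadingIndices_zero_subset (hS : 0 ∈ S) : leadingIndices L {0} ⊆ leadingIndices L S :=
  leadingIndices_mono (singleton_subset_iff.2 hS)

lemma leadingIndices_union :
    leadingIndices L (S ∪ T) = leadingIndices L S ∪ leadingIndices L T := by
  ext a
  simp only [leadingIndices, mem_ofPred_eq, mem_union, or_and_right, and_or_left, exists_or]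

lemma leadingIndices_eq_of_snd_eq_zero (hL : ∀ p ∈ L, p.2 = 0) (hS : 0 ∈ S) (hT : 0 ∈ T) :
    leadingIndices L S = leadingIndices L T := by
  ext a
  refine exists_congr fun p => and_congr_right fun hp => ?_
  simp only [hL p hp, hS, hT]

lemma leadingIndices_eq_of_mem (hL : ((0 : ι → R), (1 : R)) ∈ L) (hS : S.Nonempty)
    (hT : T.Nonempty) : leadingIndices L S = leadingIndices L T := by
  suffices h : ∀ S T : Set R, T.Nonempty → leadingIndices L S ⊆ leadingIndices L T from
    (h S T hT).antisymm (h T S hS)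
  rintro S T ⟨t, ht⟩ a ⟨p, hp, -, hpa⟩
  exact ⟨p + (t - p.2) • (0, 1), L.add_mem hp (L.smul_mem _ hL), by simpa, by simpa⟩

end Preorder

variable {R ι : Type*} [CommRing R] [LinearOrder R] [LinearOrder ι]
  {K L : Submodule R ((ι → R) × R)} {S : Set R}

lemma leadingIndices_univ :
    leadingIndices L univ = leadingIndices L (Ici 0) ∪ leadingIndices L (Iic 0) := by
  rw [← leadingIndices_union, union_comm, Iic_union_Ici]

lemma leadingIndices_Iic_eq_univ (h : leadingIndices L (Ici 0) ⊆ leadingIndices L {0}) :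
    leadingIndices L (Iic 0) = leadingIndices L univ := by
  rw [leadingIndices_univ,
    union_eq_self_of_subset_left (h.trans (leadingIndices_zero_subset self_mem_Iic))]

lemma leadingIndices_Ici_eq_univ (h : leadingIndices L (Iic 0) ⊆ leadingIndices L {0}) :
    leadingIndices L (Ici 0) = leadingIndices L univ := by
  rw [leadingIndices_univ,
    union_eq_self_of_subset_right (h.trans (leadingIndices_zero_subset self_mem_Ici))]

variable [IsStrictOrderedRing R]

lemma IsLeading.smul_add_smul {c d : ι → R} {a b : ι} {s t : R} (hc : IsLeading c a)
    (hd : IsLeading d b) (hab : a ≤ b) (hs : 0 < s) (ht : 0 ≤ t) :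
    IsLeading (s • c + t • d) a := by
  refine ⟨fun i => ?_, ?_, fun i hi => ?_⟩
  · exact add_nonneg (mul_nonneg hs.le (hc.1 i)) (mul_nonneg ht (hd.1 i))
  · exact add_pos_of_pos_of_nonneg (mul_pos hs hc.2.1) (mul_nonneg ht (hd.1 a))
  · simp [hc.2.2 i hi, hd.2.2 i (hi.trans_le hab)]

lemma mem_leadingIndices_zero_or_of_le {p q : (ι → R) × R} {a b : ι} (hp : p ∈ L) (hq : q ∈ L)
    (hpa : IsLeading p.1 a) (hqb : IsLeading q.1 b) (hpq : p.2 * q.2 ≤ 0) (hab : a ≤ b) :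
    a ∈ leadingIndices L {0} ∨ b ∈ leadingIndices L {0} := by
  by_cases hq0 : q.2 = 0
  · exact Or.inr ⟨q, hq, hq0, hqb⟩
  -- The last coordinates of `p` and `q` have opposite signs, so this combination cancels them.
  refine Or.inl ⟨|q.2| • p + |p.2| • q, L.add_mem (L.smul_mem _ hp) (L.smul_mem _ hq), ?_,
    hpa.smul_add_smul hqb hab (abs_pos.2 hq0) (abs_nonneg _)⟩
  change |q.2| * p.2 + |p.2| * q.2 = 0
  rcases mul_nonpos_iff.1 hpq with ⟨h₁, h₂⟩ | ⟨h₁, h₂⟩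
  · rw [abs_of_nonneg h₁, abs_of_nonpos h₂]; ring
  · rw [abs_of_nonpos h₁, abs_of_nonneg h₂]; ring

lemma leadingIndices_Ici_subset_or_Iic_subset (L : Submodule R ((ι → R) × R)) :
    leadingIndices L (Ici 0) ⊆ leadingIndices L {0} ∨
      leadingIndices L (Iic 0) ⊆ leadingIndices L {0} := by
  by_contra! h
  obtain ⟨⟨a, ⟨p, hp, hp0, hpa⟩, ha⟩, ⟨b, ⟨q, hq, hq0, hqb⟩, hb⟩⟩ :=
    And.imp not_subset.1 not_subset.1 h
  have hpq : p.2 * q.2 ≤ 0 := mul_nonpos_of_nonneg_of_nonpos hp0 hq0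
  rcases le_total a b with hab | hba
  · exact (mem_leadingIndices_zero_or_of_le hp hq hpa hqb hpq hab).elim ha hb
  · rw [mul_comm] at hpq
    exact (mem_leadingIndices_zero_or_of_le hq hp hqb hpa hpq hba).elim hb ha

variable [Fintype ι]

lemma leadingIndices_subset_or_subset_of_orthogonal
    (hKL : ∀ p ∈ K, ∀ q ∈ L, p.1 ⬝ᵥ q.1 + p.2 * q.2 = 0)
    (hS : ∀ s ∈ S, ∀ t ∈ S, 0 ≤ s * t) :
    leadingIndices K S ⊆ leadingIndices K {0} ∨ leadingIndices L S ⊆ leadingIndices L {0} := by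
  by_contra! h
  obtain ⟨⟨a, ⟨p, hp, hpS, hpa⟩, ha⟩, ⟨b, ⟨q, hq, hqS, hqb⟩, hb⟩⟩ :=
    And.imp not_subset.1 not_subset.1 h
  have hdot : 0 ≤ p.1 ⬝ᵥ q.1 := dotProduct_nonneg_of_nonneg hpa.1 hqb.1
  have hmul : p.2 * q.2 = 0 := by linarith [hKL p hp q hq, hS _ hpS _ hqS]
  rcases mul_eq_zero.1 hmul with hp0 | hq0
  · exact ha ⟨p, hp, hp0, hpa⟩
  · exact hb ⟨q, hq, hq0, hqb⟩

/-- For the dependences `K` and the functionals `L` of a configuration `w` followed by `q`, this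
says that one of `q` and `-q` extends `w` with the activities of the deletion of `q`, and the other
one with those of its contraction. -/
theorem leadingIndices_Ici_Iic_of_orthogonal
    (hKL : ∀ p ∈ K, ∀ q ∈ L, p.1 ⬝ᵥ q.1 + p.2 * q.2 = 0) :
    (leadingIndices K (Ici 0) = leadingIndices K {0} ∧
      leadingIndices L (Ici 0) = leadingIndices L univ ∧
      leadingIndices K (Iic 0) = leadingIndices K univ ∧
      leadingIndices L (Iic 0) = leadingIndices L {0}) ∨
    (leadingIndices K (Iic 0) = leadingIndices K {0} ∧
      leadingIndices L (Iic 0) = leadingIndices L univ ∧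
      leadingIndices K (Ici 0) = leadingIndices K univ ∧
      leadingIndices L (Ici 0) = leadingIndices L {0}) := by
  have hK := leadingIndices_Ici_subset_or_Iic_subset K
  have hL := leadingIndices_Ici_subset_or_Iic_subset L
  have hIci := leadingIndices_subset_or_subset_of_orthogonal (S := Ici 0) hKL
    fun _ hs _ ht => mul_nonneg hs ht
  have hIic := leadingIndices_subset_or_subset_of_orthogonal (S := Iic 0) hKL
    fun _ hs _ ht => mul_nonneg_of_nonpos_of_nonpos hs ht
  have hcases : (leadingIndices K (Ici 0) ⊆ leadingIndices K {0} ∧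
        leadingIndices L (Iic 0) ⊆ leadingIndices L {0}) ∨
      (leadingIndices K (Iic 0) ⊆ leadingIndices K {0} ∧
        leadingIndices L (Ici 0) ⊆ leadingIndices L {0}) := by
    tauto
  exact hcases.imp
    (fun ⟨h, h'⟩ => ⟨h.antisymm (leadingIndices_zero_subset self_mem_Ici),
      leadingIndices_Ici_eq_univ h', leadingIndices_Iic_eq_univ h,
      h'.antisymm (leadingIndices_zero_subset self_mem_Iic)⟩)
    (fun ⟨h, h'⟩ => ⟨h.antisymm (leadingIndices_zero_subset self_mem_Iic),
      leadingIndices_Iic_eq_univ h', leadingIndices_Ici_eq_univ h,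
      h'.antisymm (leadingIndices_zero_subset self_mem_Ici)⟩)

end LeadingIndices

section Configuration

variable {n : ℕ} {V : Type*} [AddCommGroup V] [Module ℝ V]

/-- The linear dependences of the configuration `w` followed by the vector `q`, the coefficient of
`q` being kept apart as the last coordinate. -/
def dependenceSpace (w : Fin n → V) (q : V) : Submodule ℝ ((Fin n → ℝ) × ℝ) :=
  LinearMap.ker ((Fintype.linearCombination ℝ w).coprod (LinearMap.toSpanSingleton ℝ V q))

/-- The vectors of values of a linear functional on the configuration `w` followed by the vector
`q`, the value at `q` being kept apart as the last coordinate. -/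
def valueSpace (w : Fin n → V) (q : V) : Submodule ℝ ((Fin n → ℝ) × ℝ) :=
  LinearMap.range
    ((LinearMap.pi fun i => Module.Dual.eval ℝ V (w i)).prod (Module.Dual.eval ℝ V q))

lemma mem_dependenceSpace {w : Fin n → V} {q : V} {p : (Fin n → ℝ) × ℝ} :
    p ∈ dependenceSpace w q ↔ ∑ i, p.1 i • w i + p.2 • q = 0 := by
  simp [dependenceSpace, Fintype.linearCombination_apply]

lemma mem_valueSpace {w : Fin n → V} {q : V} {p : (Fin n → ℝ) × ℝ} :
    p ∈ valueSpace w q ↔ ∃ f : V →ₗ[ℝ] ℝ, (fun i => f (w i), f q) = p :=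
  Iff.rfl

lemma dotProduct_add_mul_eq_zero_of_mem {w : Fin n → V} {q : V} :
    ∀ p ∈ dependenceSpace w q, ∀ r ∈ valueSpace w q, p.1 ⬝ᵥ r.1 + p.2 * r.2 = 0 := by
  rintro p hp _ ⟨f, rfl⟩
  simpa [dotProduct] using congrArg f (mem_dependenceSpace.1 hp)

lemma leadingIndices_dependenceSpace_singleton_zero (w : Fin n → V) (q : V) :
    leadingIndices (dependenceSpace w q) {0} = {a | OActive w a} := by
  ext a
  constructor
  · rintro ⟨⟨c, s⟩, hc, rfl, h0, ha⟩
    exact ⟨c, h0, by simpa using mem_dependenceSpace.1 hc, ha⟩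
  · rintro ⟨c, h0, hc, ha⟩
    exact ⟨(c, 0), mem_dependenceSpace.2 (by simpa using hc), rfl, h0, ha⟩

lemma leadingIndices_valueSpace_univ (w : Fin n → V) (q : V) :
    leadingIndices (valueSpace w q) univ = {a | ODualActive w a} := by
  ext a
  constructor
  · rintro ⟨_, ⟨f, rfl⟩, -, hf⟩
    exact ⟨f, hf⟩
  · rintro ⟨f, hf⟩
    exact ⟨_, mem_valueSpace.2 ⟨f, rfl⟩, mem_univ _, hf⟩

lemma leadingIndices_dependenceSpace_univ (w : Fin n → V) (q : V) :
    leadingIndices (dependenceSpace w q) univ = {a | OActive ((span ℝ {q}).mkQ ∘ w) a} := by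
  have hker (c : Fin n → ℝ) : ∑ i, c i • ((span ℝ {q}).mkQ ∘ w) i = 0 ↔
      ∃ s : ℝ, ∑ i, c i • w i + s • q = 0 := by
    have hmk : ∑ i, c i • ((span ℝ {q}).mkQ ∘ w) i = (span ℝ {q}).mkQ (∑ i, c i • w i) := by
      simp
    rw [hmk, ← LinearMap.mem_ker, ker_mkQ, ← neg_mem_iff, mem_span_singleton]
    simp only [eq_neg_iff_add_eq_zero, add_comm]
  ext a
  constructor
  · rintro ⟨⟨c, s⟩, hc, -, h0, ha⟩
    exact ⟨c, h0, (hker c).2 ⟨s, mem_dependenceSpace.1 hc⟩, ha⟩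
  · rintro ⟨c, h0, hc, ha⟩
    obtain ⟨s, hs⟩ := (hker c).1 hc
    exact ⟨(c, s), mem_dependenceSpace.2 hs, mem_univ _, h0, ha⟩

lemma leadingIndices_valueSpace_singleton_zero (w : Fin n → V) (q : V) :
    leadingIndices (valueSpace w q) {0} = {a | ODualActive ((span ℝ {q}).mkQ ∘ w) a} := by
  ext a
  constructor
  · rintro ⟨_, ⟨f, rfl⟩, hq, hf⟩
    have hker : span ℝ {q} ≤ LinearMap.ker f := (span_singleton_le_iff_mem _ _).2 hq
    exact ⟨(span ℝ {q}).liftQ f hker, hf⟩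
  · rintro ⟨f, hf⟩
    have hq : (span ℝ {q}).mkQ q = 0 := by simp
    exact ⟨_, mem_valueSpace.2 ⟨f ∘ₗ (span ℝ {q}).mkQ, rfl⟩, (congrArg f hq).trans (map_zero f),
      hf⟩

lemma leadingIndices_dependenceSpace_neg_Ici (w : Fin n → V) (q : V) :
    leadingIndices (dependenceSpace w (-q)) (Ici 0) =
      leadingIndices (dependenceSpace w q) (Iic 0) := by
  ext a
  constructor <;> rintro ⟨⟨c, s⟩, hc, hs, ha⟩ <;>
    exact ⟨(c, -s), by simpa [mem_dependenceSpace] using hc, by simpa using hs, ha⟩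

lemma leadingIndices_valueSpace_neg_Ici (w : Fin n → V) (q : V) :
    leadingIndices (valueSpace w (-q)) (Ici 0) = leadingIndices (valueSpace w q) (Iic 0) := by
  ext a
  constructor <;> rintro ⟨_, ⟨f, rfl⟩, hs, ha⟩ <;>
    exact ⟨_, ⟨f, rfl⟩, by simpa using hs, ha⟩

lemma preimage_castSucc_oActive (u : Fin (n + 1) → V) :
    Fin.castSucc ⁻¹' {a | OActive u a} =
      leadingIndices (dependenceSpace (u ∘ Fin.castSucc) (u (Fin.last n))) (Ici 0) := by
  ext a
  constructor
  · rintro ⟨c, h0, hc, ha, hlt⟩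
    refine ⟨(c ∘ Fin.castSucc, c (Fin.last n)), mem_dependenceSpace.2 ?_, h0 _, fun i => h0 _, ha,
      fun i hi => hlt _ (Fin.castSucc_lt_castSucc_iff.2 hi)⟩
    rw [← hc, Fin.sum_univ_castSucc]
    rfl
  · rintro ⟨⟨c, s⟩, hc, hs, h0, ha, hlt⟩
    refine ⟨Fin.snoc (α := fun _ => ℝ) c s, ?_, ?_, ?_, ?_⟩
    · simpa [Fin.forall_fin_succ', h0] using hs
    · simpa [Fin.sum_univ_castSucc] using mem_dependenceSpace.1 hc
    · simpa using ha
    · simpa [Fin.forall_fin_succ', Fin.le_last] using hlt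

lemma preimage_castSucc_oDualActive (u : Fin (n + 1) → V) :
    Fin.castSucc ⁻¹' {a | ODualActive u a} =
      leadingIndices (valueSpace (u ∘ Fin.castSucc) (u (Fin.last n))) (Ici 0) := by
  ext a
  constructor
  · rintro ⟨f, h0, ha, hlt⟩
    exact ⟨_, ⟨f, rfl⟩, h0 _, fun i => h0 _, ha,
      fun i hi => hlt _ (Fin.castSucc_lt_castSucc_iff.2 hi)⟩
  · rintro ⟨_, ⟨f, rfl⟩, hs, h0, ha, hlt⟩
    refine ⟨f, Fin.forall_fin_succ'.2 ⟨h0, hs⟩, ha, ?_⟩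
    simpa [Fin.forall_fin_succ', (Fin.le_last _).not_gt] using hlt

lemma oActive_last (u : Fin (n + 1) → V) :
    OActive u (Fin.last n) ↔ u (Fin.last n) = 0 := by
  constructor
  · rintro ⟨c, -, hc, ha, hlt⟩
    have hzero (i : Fin n) : c i.castSucc = 0 := hlt _ (Fin.castSucc_lt_last i)
    simpa [Fin.sum_univ_castSucc, hzero, ha.ne'] using hc
  · intro h
    refine ⟨Pi.single (Fin.last n) 1, fun i => ?_, by simp [h], by simp,
      fun i hi => by simp [hi.ne]⟩
    exact (Pi.single_nonneg.2 zero_le_one : (0 : Fin (n + 1) → ℝ) ≤ _) i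

lemma oDualActive_last (u : Fin (n + 1) → V) :
    ODualActive u (Fin.last n) ↔ u (Fin.last n) ∉ span ℝ (range (u ∘ Fin.castSucc)) := by
  constructor
  · rintro ⟨f, -, ha, hlt⟩ h
    have hker : span ℝ (range (u ∘ Fin.castSucc)) ≤ LinearMap.ker f :=
      span_le.2 (range_subset_iff.2 fun i => hlt _ (Fin.castSucc_lt_last i))
    exact ha.ne' (hker h)
  · intro h
    obtain ⟨f, hf, hker⟩ := exists_le_ker_of_notMem h
    have hzero (i : Fin n) : f (u i.castSucc) = 0 := hker (subset_span ⟨i, rfl⟩)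
    refine ⟨f (u (Fin.last n)) • f, ?_, by simpa using hf, ?_⟩ <;>
      simp [Fin.forall_fin_succ', hzero, mul_self_nonneg]

lemma leadingIndices_dependenceSpace_zero_right {w : Fin n → V} {S : Set ℝ} (hS : 0 ∈ S) :
    leadingIndices (dependenceSpace w 0) S = {a | OActive w a} := by
  rw [← leadingIndices_dependenceSpace_singleton_zero w 0]
  exact leadingIndices_eq_of_mem (mem_dependenceSpace.2 (by simp)) ⟨0, hS⟩ (singleton_nonempty 0)

lemma leadingIndices_valueSpace_zero_right {w : Fin n → V} {S : Set ℝ} (hS : 0 ∈ S) :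
    leadingIndices (valueSpace w 0) S = {a | ODualActive w a} := by
  rw [← leadingIndices_valueSpace_univ w 0]
  refine leadingIndices_eq_of_snd_eq_zero ?_ hS (mem_univ 0)
  rintro _ ⟨f, rfl⟩
  exact map_zero f

lemma leadingIndices_dependenceSpace_of_notMem_span {w : Fin n → V} {q : V} {S : Set ℝ}
    (hq : q ∉ span ℝ (range w)) (hS : 0 ∈ S) :
    leadingIndices (dependenceSpace w q) S = {a | OActive w a} := by
  rw [← leadingIndices_dependenceSpace_singleton_zero w q]
  refine leadingIndices_eq_of_snd_eq_zero (fun p hp => ?_) hS rfl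
  by_contra hs
  refine hq ((smul_mem_iff _ hs).1 ?_)
  rw [← neg_eq_of_add_eq_zero_right (mem_dependenceSpace.1 hp)]
  exact neg_mem (sum_mem fun i _ => smul_mem _ _ (subset_span ⟨i, rfl⟩))

lemma leadingIndices_valueSpace_of_notMem_span {w : Fin n → V} {q : V} {S : Set ℝ}
    (hq : q ∉ span ℝ (range w)) (hS : S.Nonempty) :
    leadingIndices (valueSpace w q) S = {a | ODualActive w a} := by
  rw [← leadingIndices_valueSpace_univ w q]
  refine leadingIndices_eq_of_mem ?_ hS univ_nonempty
  obtain ⟨f, hf, hker⟩ := exists_le_ker_of_notMem hq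
  have hzero (i : Fin n) : f (w i) = 0 := hker (subset_span ⟨i, rfl⟩)
  exact mem_valueSpace.2 ⟨(f q)⁻¹ • f, by ext <;> simp [hzero, hf]⟩

end Configuration

section FinSucc

variable {n : ℕ}

lemma card_insert_last (B : Finset (Fin n)) :
    (insert (Fin.last n) (B.map Fin.castSuccEmb)).card = B.card + 1 := by
  rw [Finset.card_insert_of_notMem (by simp), Finset.card_map]

lemma sum_finset_fin_succ {M : Type*} [AddCommMonoid M] (f : Finset (Fin (n + 1)) → M) :
    ∑ A, f A = ∑ B : Finset (Fin n),
      (f (B.map Fin.castSuccEmb) + f (insert (Fin.last n) (B.map Fin.castSuccEmb))) := by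
  have hmap (g : Finset (Fin (n + 1)) → M) :
      ∑ A ∈ (Finset.univ.map Fin.castSuccEmb).powerset, g A =
        ∑ B : Finset (Fin n), g (B.map Fin.castSuccEmb) := by
    simp only [Finset.map_eq_image, Finset.powerset_image, Finset.powerset_univ]
    exact Finset.sum_image fun B _ C _ h => Finset.image_injective Fin.castSuccEmb.injective h
  rw [← Finset.powerset_univ, Fin.univ_castSuccEmb, Finset.cons_eq_insert,
    Finset.sum_powerset_insert (by simp), hmap, hmap, ← Finset.sum_add_distrib]

end FinSucc

section Weight

variable {R ι : Type*} [CommSemiring R]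

/-- The monomial `x ^ |T \ A| * u ^ |T ∩ A|`, which records how many elements of `T` lie outside
and inside `A`. -/
noncomputable def activityWeight (x u : R) (A : Finset ι) (T : Set ι) : R :=
  x ^ {a | a ∉ A ∧ a ∈ T}.ncard * u ^ {a | a ∈ A ∧ a ∈ T}.ncard

lemma activityWeight_eq_prod [Fintype ι] [DecidableEq ι] (x u : R) (A : Finset ι) (T : Set ι)
    [DecidablePred (· ∈ T)] :
    activityWeight x u A T = ∏ i, if i ∈ T then if i ∈ A then u else x else 1 := by
  have hpow (z : R) (p : ι → Prop) [DecidablePred p] :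
      z ^ {a | p a}.ncard = ∏ i, if p i then z else 1 := by
    rw [Finset.prod_ite, Finset.prod_const, Finset.prod_const_one, mul_one,
      Set.ncard_eq_toFinset_card', toFinset_ofPred]
  rw [activityWeight, hpow, hpow, ← Finset.prod_mul_distrib]
  refine Finset.prod_congr rfl fun i _ => ?_
  by_cases hA : i ∈ A <;> by_cases hT : i ∈ T <;> simp [hA, hT]

variable {n : ℕ}

lemma activityWeight_map_castSucc (x u : R) (B : Finset (Fin n)) (T : Set (Fin (n + 1)))
    [Decidable (Fin.last n ∈ T)] :
    activityWeight x u (B.map Fin.castSuccEmb) T =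
      activityWeight x u B (Fin.castSucc ⁻¹' T) * if Fin.last n ∈ T then x else 1 := by
  classical
  simp [activityWeight_eq_prod, Fin.prod_univ_castSucc]

lemma activityWeight_insert_last (x u : R) (B : Finset (Fin n)) (T : Set (Fin (n + 1)))
    [Decidable (Fin.last n ∈ T)] :
    activityWeight x u (insert (Fin.last n) (B.map Fin.castSuccEmb)) T =
      activityWeight x u B (Fin.castSucc ⁻¹' T) * if Fin.last n ∈ T then u else 1 := by
  classical
  simp [activityWeight_eq_prod, Fin.prod_univ_castSucc]

end Weight

section Reorient

variable {n : ℕ} {V : Type*} [AddCommGroup V]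

lemma reorient_map_comp_castSucc (v : Fin (n + 1) → V) (B : Finset (Fin n)) :
    reorient v (B.map Fin.castSuccEmb) ∘ Fin.castSucc = reorient (v ∘ Fin.castSucc) B := by
  ext i
  simp [reorient]

lemma reorient_insert_comp_castSucc (v : Fin (n + 1) → V) (B : Finset (Fin n)) :
    reorient v (insert (Fin.last n) (B.map Fin.castSuccEmb)) ∘ Fin.castSucc =
      reorient (v ∘ Fin.castSucc) B := by
  ext i
  simp [reorient]

lemma reorient_map_last (v : Fin (n + 1) → V) (B : Finset (Fin n)) :
    reorient v (B.map Fin.castSuccEmb) (Fin.last n) = v (Fin.last n) := by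
  simp [reorient]

lemma reorient_insert_last (v : Fin (n + 1) → V) (A : Finset (Fin (n + 1))) :
    reorient v (insert (Fin.last n) A) (Fin.last n) = -v (Fin.last n) := by
  simp [reorient]

variable [Module ℝ V]

lemma comp_reorient {W : Type*} [AddCommGroup W] [Module ℝ W] (f : V →ₗ[ℝ] W) (v : Fin n → V)
    (B : Finset (Fin n)) : f ∘ reorient v B = reorient (f ∘ v) B := by
  ext i
  simp only [Function.comp_apply, reorient, apply_ite f, map_neg]

lemma span_range_reorient (v : Fin n → V) (B : Finset (Fin n)) :
    span ℝ (range (reorient v B)) = span ℝ (range v) := by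
  have hmem (W : Submodule ℝ V) (i : Fin n) : reorient v B i ∈ W ↔ v i ∈ W := by
    simp only [reorient]
    split_ifs <;> simp
  refine eq_of_forall_ge_iff fun W => ?_
  simp only [span_le, range_subset_iff, SetLike.mem_coe, hmem]

end Reorient

section ActivitySum

variable {R : Type*} [CommSemiring R] {n : ℕ} {V : Type*} [AddCommGroup V] [Module ℝ V]

/-- The generating function of all reorientations of `v`: the variables `x`, `u`, `y`, `z` mark
`θ*`, `θ̄*`, `θ`, `θ̄`. -/
noncomputable def activitySum (v : Fin n → V) (x u y z : R) : R :=
  ∑ A : Finset (Fin n),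
    x ^ thetaStar v A * u ^ thetaStarBar v A * (y ^ theta v A * z ^ thetaBar v A)

lemma activitySum_eq_sum_activityWeight (v : Fin n → V) (x u y z : R) :
    activitySum v x u y z = ∑ A : Finset (Fin n),
      activityWeight x u A {a | ODualActive (reorient v A) a} *
        activityWeight y z A {a | OActive (reorient v A) a} :=
  rfl

open Classical in
/-- The two terms come from keeping and from negating the last vector: by
`leadingIndices_dependenceSpace_neg_Ici` and its dual, negating it turns `Ici 0` into `Iic 0`. -/
lemma activitySum_succ (v : Fin (n + 1) → V) (x u y z : R) :
    activitySum v x u y z = ∑ B : Finset (Fin n),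
      (activityWeight x u B (leadingIndices
          (valueSpace (reorient (v ∘ Fin.castSucc) B) (v (Fin.last n))) (Ici 0)) *
        (if v (Fin.last n) ∉ span ℝ (range (v ∘ Fin.castSucc)) then x else 1) *
        (activityWeight y z B (leadingIndices
          (dependenceSpace (reorient (v ∘ Fin.castSucc) B) (v (Fin.last n))) (Ici 0)) *
        (if v (Fin.last n) = 0 then y else 1)) +
      activityWeight x u B (leadingIndices
          (valueSpace (reorient (v ∘ Fin.castSucc) B) (v (Fin.last n))) (Iic 0)) *
        (if v (Fin.last n) ∉ span ℝ (range (v ∘ Fin.castSucc)) then u else 1) *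
        (activityWeight y z B (leadingIndices
          (dependenceSpace (reorient (v ∘ Fin.castSucc) B) (v (Fin.last n))) (Iic 0)) *
        (if v (Fin.last n) = 0 then z else 1))) := by
  simp only [activitySum_eq_sum_activityWeight, sum_finset_fin_succ, activityWeight_map_castSucc,
    activityWeight_insert_last, preimage_castSucc_oActive, preimage_castSucc_oDualActive,
    mem_ofPred_eq, oActive_last, oDualActive_last, reorient_map_comp_castSucc,
    reorient_insert_comp_castSucc, reorient_map_last, reorient_insert_last, span_range_reorient,
    leadingIndices_dependenceSpace_neg_Ici, leadingIndices_valueSpace_neg_Ici, neg_mem_iff,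
    neg_eq_zero]

theorem activitySum_of_last_eq_zero {v : Fin (n + 1) → V} (h : v (Fin.last n) = 0)
    (x u y z : R) :
    activitySum v x u y z = (y + z) * activitySum (v ∘ Fin.castSucc) x u y z := by
  rw [activitySum_succ, activitySum_eq_sum_activityWeight, Finset.mul_sum]
  refine Finset.sum_congr rfl fun B _ => ?_
  simp only [h, zero_mem, not_true_eq_false, if_true, if_false,
    leadingIndices_dependenceSpace_zero_right self_mem_Ici,
    leadingIndices_dependenceSpace_zero_right self_mem_Iic,
    leadingIndices_valueSpace_zero_right self_mem_Ici,
    leadingIndices_valueSpace_zero_right self_mem_Iic]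
  ring

theorem activitySum_of_last_notMem_span {v : Fin (n + 1) → V}
    (h : v (Fin.last n) ∉ span ℝ (range (v ∘ Fin.castSucc))) (x u y z : R) :
    activitySum v x u y z = (x + u) * activitySum (v ∘ Fin.castSucc) x u y z := by
  have hne : v (Fin.last n) ≠ 0 := fun h0 => h (h0 ▸ zero_mem _)
  rw [activitySum_succ, activitySum_eq_sum_activityWeight, Finset.mul_sum]
  refine Finset.sum_congr rfl fun B _ => ?_
  have hB : v (Fin.last n) ∉ span ℝ (range (reorient (v ∘ Fin.castSucc) B)) := by
    rwa [span_range_reorient]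
  simp only [h, hne, not_false_eq_true, if_true, if_false,
    leadingIndices_dependenceSpace_of_notMem_span hB self_mem_Ici,
    leadingIndices_dependenceSpace_of_notMem_span hB self_mem_Iic,
    leadingIndices_valueSpace_of_notMem_span hB nonempty_Ici,
    leadingIndices_valueSpace_of_notMem_span hB nonempty_Iic]
  ring

theorem activitySum_of_last_mem_span {v : Fin (n + 1) → V} (h0 : v (Fin.last n) ≠ 0)
    (h : v (Fin.last n) ∈ span ℝ (range (v ∘ Fin.castSucc))) (x u y z : R) :
    activitySum v x u y z = activitySum (v ∘ Fin.castSucc) x u y z +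
      activitySum ((span ℝ {v (Fin.last n)}).mkQ ∘ v ∘ Fin.castSucc) x u y z := by
  simp only [activitySum_succ, activitySum_eq_sum_activityWeight, ← Finset.sum_add_distrib,
    ← comp_reorient, ← leadingIndices_dependenceSpace_singleton_zero _ (v (Fin.last n)),
    ← leadingIndices_valueSpace_univ _ (v (Fin.last n)), h, h0, not_true_eq_false, if_false,
    mul_one]
  refine Finset.sum_congr rfl fun B _ => ?_
  set w := reorient (v ∘ Fin.castSucc) B
  rw [← leadingIndices_valueSpace_singleton_zero, ← leadingIndices_dependenceSpace_univ]
  rcases leadingIndices_Ici_Iic_of_orthogonal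
    (dotProduct_add_mul_eq_zero_of_mem (w := w) (q := v (Fin.last n)))
    with ⟨hK, hL, hK', hL'⟩ | ⟨hK, hL, hK', hL'⟩
  · rw [hK, hL, hK', hL']
  · rw [hK, hL, hK', hL', add_comm]

end ActivitySum

section Rank

variable {n : ℕ} {V : Type*} [AddCommGroup V] [Module ℝ V]

lemma finrank_map_mkQ_add {P W : Submodule ℝ V} [FiniteDimensional ℝ W] (h : P ≤ W) :
    Module.finrank ℝ (W.map P.mkQ) + Module.finrank ℝ P = Module.finrank ℝ W := by
  rw [← LinearMap.finrank_range_add_finrank_ker (P.mkQ.domRestrict W),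
    LinearMap.range_domRestrict, LinearMap.ker_domRestrict, ker_mkQ,
    (comapSubtypeEquivOfLe h).finrank_eq]

lemma finrank_span_insert_of_ne_zero {s : Set V} {q : V} (hs : s.Finite) (hq : q ≠ 0) :
    Module.finrank ℝ (span ℝ (insert q s)) =
      Module.finrank ℝ (span ℝ ((span ℝ {q}).mkQ '' s)) + 1 := by
  have := FiniteDimensional.span_of_finite ℝ (hs.insert q)
  have hzero : (span ℝ {q}).mkQ q = 0 := by simp
  rw [← finrank_map_mkQ_add (span_mono (singleton_subset_iff.2 (mem_insert q s))), map_span,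
    image_insert_eq, hzero, span_insert_zero, finrank_span_singleton hq]

lemma finrank_span_insert_of_notMem {s : Set V} {q : V} (hs : s.Finite) (hq : q ∉ span ℝ s) :
    Module.finrank ℝ (span ℝ (insert q s)) = Module.finrank ℝ (span ℝ s) + 1 := by
  have := FiniteDimensional.span_of_finite ℝ hs
  have hne : q ≠ 0 := fun h => hq (h ▸ zero_mem _)
  have hdisj : span ℝ {q} ⊓ span ℝ s = ⊥ :=
    disjoint_iff.1 ((disjoint_span_singleton' hne).2 hq).symm
  have hadd := finrank_sup_add_finrank_inf_eq (span ℝ {q}) (span ℝ s)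
  rwa [hdisj, finrank_bot, add_zero, finrank_span_singleton hne, ← span_union, singleton_union,
    add_comm 1] at hadd

lemma vrank_le_card (v : Fin n → V) (A : Finset (Fin n)) : vrank v A ≤ A.card := by
  classical
  rw [vrank, ← Finset.coe_image]
  exact (finrank_span_finset_le_card _).trans Finset.card_image_le

lemma vrank_mono (v : Fin n → V) {S T : Set (Fin n)} (h : S ⊆ T) : vrank v S ≤ vrank v T :=
  have := FiniteDimensional.span_of_finite ℝ (toFinite (v '' T))
  finrank_mono (span_mono (image_mono h))

lemma vrank_map_castSucc (v : Fin (n + 1) → V) (B : Finset (Fin n)) :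
    vrank v ↑(B.map Fin.castSuccEmb) = vrank (v ∘ Fin.castSucc) B := by
  rw [vrank, vrank, Finset.coe_map, image_comp, Fin.coe_castSuccEmb]

lemma vrank_insert_last (v : Fin (n + 1) → V) (B : Finset (Fin n)) :
    vrank v ↑(insert (Fin.last n) (B.map Fin.castSuccEmb)) =
      Module.finrank ℝ (span ℝ (insert (v (Fin.last n)) ((v ∘ Fin.castSucc) '' B))) := by
  rw [vrank, Finset.coe_insert, image_insert_eq, Finset.coe_map, image_comp, Fin.coe_castSuccEmb]

lemma vrank_univ_succ (v : Fin (n + 1) → V) :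
    vrank v univ =
      Module.finrank ℝ (span ℝ (insert (v (Fin.last n)) ((v ∘ Fin.castSucc) '' univ))) := by
  rw [← Finset.coe_univ, ← Finset.coe_univ, ← vrank_insert_last, Fin.univ_castSuccEmb,
    Finset.cons_eq_insert]

end Rank

section Tutte

variable {n : ℕ} {V : Type*} [AddCommGroup V] [Module ℝ V]

lemma tutteV_succ (v : Fin (n + 1) → V) (x y : ℝ) :
    tutteV v x y = ∑ B : Finset (Fin n),
      ((x - 1) ^ (vrank v univ - vrank (v ∘ Fin.castSucc) B) *
          (y - 1) ^ (B.card - vrank (v ∘ Fin.castSucc) B) +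
        (x - 1) ^ (vrank v univ - vrank v ↑(insert (Fin.last n) (B.map Fin.castSuccEmb))) *
          (y - 1) ^ (B.card + 1 - vrank v ↑(insert (Fin.last n) (B.map Fin.castSuccEmb)))) := by
  simp only [tutteV, sum_finset_fin_succ, vrank_map_castSucc, Finset.card_map, card_insert_last]

theorem tutteV_of_last_eq_zero {v : Fin (n + 1) → V} (h : v (Fin.last n) = 0) (x y : ℝ) :
    tutteV v x y = y * tutteV (v ∘ Fin.castSucc) x y := by
  have huniv : vrank v univ = vrank (v ∘ Fin.castSucc) univ := by
    rw [vrank_univ_succ, h, span_insert_zero, vrank]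
  have hins (B : Finset (Fin n)) : vrank v ↑(insert (Fin.last n) (B.map Fin.castSuccEmb)) =
      vrank (v ∘ Fin.castSucc) B := by
    rw [vrank_insert_last, h, span_insert_zero, vrank]
  rw [tutteV_succ, tutteV, Finset.mul_sum]
  refine Finset.sum_congr rfl fun B _ => ?_
  rw [huniv, hins, Nat.sub_add_comm (vrank_le_card _ B)]
  ring

theorem tutteV_of_last_notMem_span {v : Fin (n + 1) → V}
    (h : v (Fin.last n) ∉ span ℝ (range (v ∘ Fin.castSucc))) (x y : ℝ) :
    tutteV v x y = x * tutteV (v ∘ Fin.castSucc) x y := by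
  have hfinrank (S : Set (Fin n)) :
      Module.finrank ℝ (span ℝ (insert (v (Fin.last n)) ((v ∘ Fin.castSucc) '' S))) =
        vrank (v ∘ Fin.castSucc) S + 1 :=
    finrank_span_insert_of_notMem (toFinite _) fun hS => h (span_mono (image_subset_range _ _) hS)
  rw [tutteV_succ, tutteV, Finset.mul_sum]
  refine Finset.sum_congr rfl fun B _ => ?_
  rw [vrank_univ_succ, vrank_insert_last, hfinrank, hfinrank,
    Nat.sub_add_comm (vrank_mono _ (subset_univ _)), Nat.add_sub_add_right, Nat.add_sub_add_right]
  ring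

theorem tutteV_of_last_mem_span {v : Fin (n + 1) → V} (h0 : v (Fin.last n) ≠ 0)
    (h : v (Fin.last n) ∈ span ℝ (range (v ∘ Fin.castSucc))) (x y : ℝ) :
    tutteV v x y = tutteV (v ∘ Fin.castSucc) x y +
      tutteV ((span ℝ {v (Fin.last n)}).mkQ ∘ v ∘ Fin.castSucc) x y := by
  have hfinrank (S : Set (Fin n)) :
      Module.finrank ℝ (span ℝ (insert (v (Fin.last n)) ((v ∘ Fin.castSucc) '' S))) =
        vrank ((span ℝ {v (Fin.last n)}).mkQ ∘ v ∘ Fin.castSucc) S + 1 := by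
    rw [finrank_span_insert_of_ne_zero (toFinite _) h0, vrank, image_comp _ (v ∘ Fin.castSucc)]
  have huniv : vrank v univ = vrank (v ∘ Fin.castSucc) univ := by
    rw [vrank_univ_succ, span_insert_eq_span (by rwa [image_univ]), vrank]
  rw [tutteV_succ, tutteV, tutteV, ← Finset.sum_add_distrib]
  refine Finset.sum_congr rfl fun B _ => ?_
  congr 1
  · rw [huniv]
  · rw [vrank_univ_succ, vrank_insert_last, hfinrank, hfinrank, Nat.add_sub_add_right,
      Nat.add_sub_add_right]

theorem tutteV_add_add (v : Fin n → V) (x u y z : ℝ) :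
    tutteV v (x + u) (y + z) = activitySum v x u y z := by
  induction n generalizing V with
  | zero =>
    have hncard (S : Set (Fin 0)) : S.ncard = 0 := by rw [S.eq_empty_of_isEmpty, ncard_empty]
    have hcard (A : Finset (Fin 0)) : A.card = 0 := by rw [A.eq_empty_of_isEmpty, Finset.card_empty]
    have hrank (S : Set (Fin 0)) : vrank v S = 0 := by
      rw [vrank, S.eq_empty_of_isEmpty, image_empty, span_empty, finrank_bot]
    simp [tutteV, activitySum, thetaStar, thetaStarBar, theta, thetaBar, hncard, hcard, hrank]
  | succ n ih =>
    by_cases h0 : v (Fin.last n) = 0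
    · rw [tutteV_of_last_eq_zero h0, activitySum_of_last_eq_zero h0, ih]
    by_cases h : v (Fin.last n) ∈ span ℝ (range (v ∘ Fin.castSucc))
    · rw [tutteV_of_last_mem_span h0 h, activitySum_of_last_mem_span h0 h, ih, ih]
    · rw [tutteV_of_last_notMem_span h, activitySum_of_last_notMem_span h, ih]

lemma activitySum_zero_zero (v : Fin n → V) (x y : ℝ) :
    activitySum v x 0 y 0 =
      ∑ A ∈ Finset.univ.filter
        (fun A : Finset (Fin n) => thetaStarBar v A = 0 ∧ thetaBar v A = 0),
        x ^ thetaStar v A * y ^ theta v A := by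
  rw [activitySum, Finset.sum_filter]
  refine Finset.sum_congr rfl fun A _ => ?_
  by_cases hd : thetaStarBar v A = 0 <;> by_cases ho : thetaBar v A = 0 <;> simp [hd, ho]

theorem statement11_general (v : Fin n → V) (x y : ℝ) :
    tutteV v x y =
      ∑ A ∈ Finset.univ.filter
        (fun A : Finset (Fin n) => thetaStarBar v A = 0 ∧ thetaBar v A = 0),
        x ^ thetaStar v A * y ^ theta v A := by
  simpa only [add_zero, activitySum_zero_zero] using tutteV_add_add v x 0 y 0

end Tutte

/-- restricted-sum expansion of the Tutte polynomial:
`t(x, y) = ∑_{A : θ̄*(A) = 0, θ̄(A) = 0} x^θ*(A) y^θ(A)`. -/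
theorem statement11 {n : ℕ} {V : Type*} [AddCommGroup V] [Module ℝ V] [FiniteDimensional ℝ V]
    (v : Fin n → V) (x y : ℝ) :
    tutteV v x y =
      ∑ A ∈ Finset.univ.filter
        (fun A : Finset (Fin n) => thetaStarBar v A = 0 ∧ thetaBar v A = 0),
        x ^ thetaStar v A * y ^ theta v A :=
  statement11_general v x y
end

section
/- (4-variable expansion for oriented matroid perspectives, realizable case.) For every vector configuration v : Fin n → V, every linear map π : V →ₗ[ℝ] W with v' = π ∘ v, and all real numbers x, u, y, w: t(M,M'; x+u, y+w, 1) = ∑_{A ⊆ Fin n} x^{θ*_{M'}(A)} · u^{θ̄*_{M'}(A)} · y^{θ_M(A)} · w^{θ̄_M(A)}. -/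
open Set Submodule

/-- The evaluation at `z = 1` of the 3-variable Tutte polynomial of the oriented matroid
perspective realized by the configurations `v` (for `M`) and `v'` (for `M'`):
`t(M,M';x,y,1) = ∑_{A ⊆ Fin n} (x-1)^(r'(E) - r'(A)) * (y-1)^(|A| - r(A))`. -/
noncomputable def tuttePerspV {n : ℕ} {V W : Type*} [AddCommGroup V] [Module ℝ V]
    [AddCommGroup W] [Module ℝ W] (v : Fin n → V) (v' : Fin n → W) (x y : ℝ) : ℝ :=
  ∑ A : Finset (Fin n),
    (x - 1) ^ (vrank v' Set.univ - vrank v' ↑A) * (y - 1) ^ (A.card - vrank v ↑A)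

/-! Replace `M` and `M'` by the space `Z` of linear dependencies of `v` and the space `Y` of
functionals on `v'`; these are orthogonal, and all ranks and activities can be read off from them.
Deleting `e` from both matroids imposes `z e = 0` on `Z` and forgets the coordinate `e` on `Y`,
while contracting `e` does the converse, so that the situation is self-dual.

Let `e` be the largest element and compare `A` with `insert e A`. Combining two vectors of `Z`
with opposite signs at `e` shows that, for one of the two sets, the elements below `e` have the
same activity in `Z` as after deletion of `e`, and for the other one as after contraction. The
same holds for `Y` with the roles exchanged, and orthogonality makes the two choices compatible:
vectors `z` and `y` that are nonnegative on the same reorientation satisfy `z i * y i = 0` for all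
`i`. Hence the two summands for `A` and `insert e A` are the summands of the deletion and of the
contraction, up to the factors contributed by `e` itself when it is a loop of `M` or a coloop of
`M'`. This is the deletion-contraction recursion satisfied by the Tutte polynomial. -/

section LinearAlgebra

variable {R ι : Type*} [Semiring R]

/-- The subspace of the vectors of `Z` that vanish on `B`. If `Z` is the space of linear
dependencies of a configuration, this deletes `B`; if `Z` is its space of linear functionals,
this contracts `B`. -/
def vanishingOn (Z : Submodule R (ι → R)) (B : Set ι) : Submodule R (ι → R) :=
  Z ⊓ Submodule.pi B fun _ => ⊥

/-- Setting the coordinate `e` to zero. Mapping a space of linear dependencies along it is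
contraction of `e`, mapping a space of linear functionals is deletion of `e`; the index set
stays the same. -/
def eraseCoord (R : Type*) {ι : Type*} [Semiring R] [DecidableEq ι] (e : ι) :
    (ι → R) →ₗ[R] (ι → R) where
  toFun z := Function.update z e 0
  map_add' z z' := by rw [← Function.update_add, add_zero]
  map_smul' c z := by rw [RingHom.id_apply, ← Function.update_smul, smul_zero]

variable {Z : Submodule R (ι → R)} {B : Set ι} {z : ι → R} {e i : ι}

@[simp]
lemma mem_vanishingOn : z ∈ vanishingOn Z B ↔ z ∈ Z ∧ ∀ i ∈ B, z i = 0 := by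
  simp [vanishingOn, Submodule.mem_pi]

lemma vanishingOn_le : vanishingOn Z B ≤ Z := inf_le_left

lemma vanishingOn_insert (Z : Submodule R (ι → R)) (e : ι) (B : Set ι) :
    vanishingOn Z (insert e B) = vanishingOn (vanishingOn Z {e}) B := by
  ext; simp [and_assoc]

lemma apply_eq_zero_of_mem_vanishingOn_singleton (h : i = e ∨ ∀ z ∈ Z, z i = 0) :
    ∀ z ∈ vanishingOn Z {e}, z i = 0 := by
  rintro z hz
  obtain ⟨hz, hze⟩ := mem_vanishingOn.1 hz
  exact h.elim (fun hi => hze i hi) fun h => h z hz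

lemma vanishingOn_singleton_eq_self (h : ∀ z ∈ Z, z e = 0) : vanishingOn Z {e} = Z := by
  ext z; simpa using h z

variable [DecidableEq ι]

@[simp]
lemma eraseCoord_self : eraseCoord R e z e = 0 := Function.update_self ..

lemma eraseCoord_of_ne (h : i ≠ e) : eraseCoord R e z i = z i := Function.update_of_ne h ..

lemma eraseCoord_eq_self (h : z e = 0) : eraseCoord R e z = z :=
  Function.update_eq_self_iff.2 h.symm

lemma apply_eq_zero_of_mem_map_eraseCoord (h : i = e ∨ ∀ z ∈ Z, z i = 0) :
    ∀ z ∈ Z.map (eraseCoord R e), z i = 0 := by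
  rintro _ ⟨z, hz, rfl⟩
  rcases eq_or_ne i e with rfl | hi
  · exact eraseCoord_self
  · rw [eraseCoord_of_ne hi, h.resolve_left hi z hz]

lemma map_eraseCoord_eq_self (h : ∀ z ∈ Z, z e = 0) : Z.map (eraseCoord R e) = Z := by
  ext z
  constructor
  · rintro ⟨z, hz, rfl⟩
    rwa [eraseCoord_eq_self (h z hz)]
  · exact fun hz => ⟨z, hz, eraseCoord_eq_self (h z hz)⟩

lemma vanishingOn_map_eraseCoord (Z : Submodule R (ι → R)) (B : Set ι) (e : ι) :
    vanishingOn (Z.map (eraseCoord R e)) B =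
      (vanishingOn Z (B \ {e})).map (eraseCoord R e) := by
  have hB (z : ι → R) : (∀ i ∈ B, eraseCoord R e z i = 0) ↔ ∀ i ∈ B \ {e}, z i = 0 := by
    refine ⟨fun h i hi => (eraseCoord_of_ne hi.2).symm.trans (h i hi.1), fun h i hi => ?_⟩
    rcases eq_or_ne i e with rfl | hie
    · exact eraseCoord_self
    · rw [eraseCoord_of_ne hie, h i ⟨hi, hie⟩]
  ext z
  simp only [mem_vanishingOn, Submodule.mem_map]
  constructor
  · rintro ⟨⟨z, hz, rfl⟩, h⟩
    exact ⟨z, ⟨hz, (hB z).1 h⟩, rfl⟩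
  · rintro ⟨z, ⟨hz, h⟩, rfl⟩
    exact ⟨⟨z, hz, rfl⟩, (hB z).2 h⟩

end LinearAlgebra

section Ring

variable {R ι : Type*} [Ring R] [DecidableEq ι] {Z : Submodule R (ι → R)} {e : ι}

lemma eraseCoord_eq_sub (e : ι) (z : ι → R) :
    eraseCoord R e z = z - z e • Pi.single e 1 := by
  ext i
  rcases eq_or_ne i e with rfl | hi
  · simp
  · simp [hi, eraseCoord_of_ne hi]

lemma map_eraseCoord_eq_vanishingOn (h : Pi.single e 1 ∈ Z) :
    Z.map (eraseCoord R e) = vanishingOn Z {e} := by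
  ext z
  simp only [Submodule.mem_map, mem_vanishingOn, Set.mem_singleton_iff, forall_eq]
  constructor
  · rintro ⟨z, hz, rfl⟩
    exact ⟨eraseCoord_eq_sub e z ▸ Z.sub_mem hz (Z.smul_mem _ h), eraseCoord_self⟩
  · rintro ⟨hz, hze⟩
    exact ⟨z, hz, eraseCoord_eq_self hze⟩

end Ring

section Rank

variable {𝕜 ι V : Type*} [Field 𝕜] [AddCommGroup V] [Module 𝕜 V]

lemma finrank_map_add_finrank_inf_ker {V₂ : Type*} [AddCommGroup V₂] [Module 𝕜 V₂]
    (f : V →ₗ[𝕜] V₂) (U : Submodule 𝕜 V) [FiniteDimensional 𝕜 U] :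
    Module.finrank 𝕜 (U.map f) + Module.finrank 𝕜 ↥(U ⊓ LinearMap.ker f) =
      Module.finrank 𝕜 U := by
  rw [← LinearMap.finrank_range_add_finrank_ker (f.domRestrict U), LinearMap.range_domRestrict,
    LinearMap.ker_domRestrict, ← Submodule.map_comap_subtype,
    Submodule.finrank_map_subtype_eq]

lemma ker_eraseCoord [DecidableEq ι] (e : ι) :
    LinearMap.ker (eraseCoord 𝕜 e) = span 𝕜 {Pi.single e 1} := by
  ext z
  rw [LinearMap.mem_ker, eraseCoord_eq_sub, sub_eq_zero, Submodule.mem_span_singleton]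
  refine ⟨fun h => ⟨z e, h.symm⟩, ?_⟩
  rintro ⟨c, rfl⟩
  simp

open Classical in
lemma finrank_vanishingOn_diff_singleton [Finite ι] [DecidableEq ι] (Z : Submodule 𝕜 (ι → 𝕜))
    (B : Set ι) (e : ι) :
    Module.finrank 𝕜 (vanishingOn Z (B \ {e})) =
      Module.finrank 𝕜 (vanishingOn (Z.map (eraseCoord 𝕜 e)) B) +
        if Pi.single e 1 ∈ Z then 1 else 0 := by
  have hmem : Pi.single e 1 ∈ vanishingOn Z (B \ {e}) ↔ Pi.single e 1 ∈ Z := by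
    simp +contextual
  have hsingle : (Pi.single e 1 : ι → 𝕜) ≠ 0 := by simp
  rw [vanishingOn_map_eraseCoord Z,
    ← finrank_map_add_finrank_inf_ker (eraseCoord 𝕜 e) (vanishingOn Z (B \ {e})), ker_eraseCoord]
  split_ifs with h
  · rw [inf_eq_right.2 ((Submodule.span_singleton_le_iff_mem _ _).2 (hmem.2 h)),
      finrank_span_singleton hsingle]
  · rw [(Submodule.disjoint_span_singleton_of_notMem (mt hmem.1 h)).eq_bot, finrank_bot]

end Rank

section Perspective

variable {R ι : Type*} [CommRing R] [Fintype ι] {Z Y : Submodule R (ι → R)} {e : ι}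

/-- `Z` and `Y` are orthogonal. With `Z` the space of linear dependencies of a configuration
realizing `M` and `Y` the space of linear functionals on a configuration realizing `M'`, this
says that `M → M'` is an oriented matroid perspective. -/
def IsPerspective (Z Y : Submodule R (ι → R)) : Prop :=
  ∀ z ∈ Z, ∀ y ∈ Y, z ⬝ᵥ y = 0

lemma IsPerspective.symm (h : IsPerspective Z Y) : IsPerspective Y Z :=
  fun y hy z hz => by rw [dotProduct_comm, h z hz y hy]

variable [DecidableEq ι]

lemma IsPerspective.apply_eq_zero (h : IsPerspective Z Y) (he : Pi.single e 1 ∈ Y) :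
    ∀ z ∈ Z, z e = 0 :=
  fun z hz => by simpa using h z hz _ he

lemma IsPerspective.vanishingOn_map_eraseCoord (h : IsPerspective Z Y) (e : ι) :
    IsPerspective (vanishingOn Z {e}) (Y.map (eraseCoord R e)) := by
  rintro z hz _ ⟨y, hy, rfl⟩
  obtain ⟨hz, hze⟩ := mem_vanishingOn.1 hz
  rw [eraseCoord_eq_sub, dotProduct_sub, h z hz y hy, dotProduct_smul, dotProduct_single,
    hze e rfl, zero_mul, smul_zero, sub_zero]

lemma IsPerspective.map_eraseCoord_eq (h : IsPerspective Z Y) (he : Pi.single e 1 ∈ Y) :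
    Z.map (eraseCoord R e) = vanishingOn Z {e} := by
  have hZ := h.apply_eq_zero he
  rw [map_eraseCoord_eq_self hZ, vanishingOn_singleton_eq_self hZ]

end Perspective

section Reorientation

variable {R ι : Type*} [Ring R] [DecidableEq ι] {B C : Finset ι} {e i : ι}

/-- The sign by which the reorientation on `A` multiplies the coordinate `i`. -/
def reorientSign (R : Type*) [Ring R] {ι : Type*} [DecidableEq ι] (A : Finset ι) (i : ι) : R :=
  if i ∈ A then -1 else 1

lemma reorientSign_mul_self (A : Finset ι) (i : ι) :
    reorientSign R A i * reorientSign R A i = 1 := by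
  unfold reorientSign; split_ifs <;> simp

lemma reorientSign_mul_cancel_left (A : Finset ι) (i : ι) (r : R) :
    reorientSign R A i * (reorientSign R A i * r) = r := by
  rw [← mul_assoc, reorientSign_mul_self, one_mul]

lemma reorientSign_ne_zero [Nontrivial R] (A : Finset ι) (i : ι) : reorientSign R A i ≠ 0 :=
  left_ne_zero_of_mul_eq_one (reorientSign_mul_self A i)

lemma reorientSign_eq_of_ne (h : symmDiff B C = {e}) (hi : i ≠ e) :
    reorientSign R B i = reorientSign R C i := by
  have : i ∉ symmDiff B C := by simp [h, hi]
  have : i ∈ B ↔ i ∈ C := by grind [Finset.mem_symmDiff]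
  simp [reorientSign, this]

lemma reorientSign_eq_neg (h : symmDiff B C = {e}) :
    reorientSign R B e = -reorientSign R C e := by
  have : e ∈ symmDiff B C := by simp [h]
  rcases Finset.mem_symmDiff.1 this with ⟨hB, hC⟩ | ⟨hC, hB⟩ <;> simp [reorientSign, hB, hC]

end Reorientation

section Activity

variable {R ι : Type*} [Ring R] [LinearOrder R] [LinearOrder ι]

/-- After reorientation on `A`, the vector `z` is nonnegative with smallest support element `a`. -/
def IsLeadOf (A : Finset ι) (a : ι) (z : ι → R) : Prop :=
  (∀ i, 0 ≤ reorientSign R A i * z i) ∧ z a ≠ 0 ∧ ∀ i < a, z i = 0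

/-- `a` is active in `Z` reoriented on `A`. This is orientation activity when `Z` is the space of
linear dependencies of a configuration, and dual orientation activity when `Z` is its space of
linear functionals. -/
def IsActive (Z : Submodule R (ι → R)) (A : Finset ι) (a : ι) : Prop :=
  ∃ z ∈ Z, IsLeadOf A a z

/-- On the reorientation by `A`, imposing `z e = 0` preserves the activity of every element
below `e`. -/
def ActivityDescends (Z : Submodule R (ι → R)) (e : ι) (A : Finset ι) : Prop :=
  ∀ a < e, IsActive Z A a → IsActive (vanishingOn Z {e}) A a

variable {Z Z' : Submodule R (ι → R)} {A B C : Finset ι} {a e : ι} {z : ι → R}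

lemma IsActive.mono (h : Z ≤ Z') : IsActive Z A a → IsActive Z' A a :=
  fun ⟨z, hz, hlead⟩ => ⟨z, h hz, hlead⟩

lemma not_isActive (hZ : ∀ z ∈ Z, z a = 0) : ¬IsActive Z A a :=
  fun ⟨z, hz, hlead⟩ => hlead.2.1 (hZ z hz)

lemma isLeadOf_congr (h : symmDiff B C = {e}) (hz : z e = 0) :
    IsLeadOf B a z ↔ IsLeadOf C a z := by
  have (i : ι) : reorientSign R B i * z i = reorientSign R C i * z i := by
    rcases eq_or_ne i e with rfl | hi
    · rw [hz, mul_zero, mul_zero]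
    · rw [reorientSign_eq_of_ne h hi]
  simp only [IsLeadOf, this]

lemma isActive_congr (h : symmDiff B C = {e}) (hZ : ∀ z ∈ Z, z e = 0) :
    IsActive Z B a ↔ IsActive Z C a :=
  exists_congr fun z => and_congr_right fun hz => isLeadOf_congr h (hZ z hz)

lemma isLeadOf_iff_eraseCoord (ha : a < e) :
    IsLeadOf A a z ↔ IsLeadOf A a (eraseCoord R e z) ∧ 0 ≤ reorientSign R A e * z e := by
  have hlt : (∀ i < a, z i = 0) ↔ ∀ i < a, eraseCoord R e z i = 0 :=
    forall₂_congr fun i hi => by rw [eraseCoord_of_ne (hi.trans ha).ne]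
  have hnonneg : (∀ i, 0 ≤ reorientSign R A i * z i) ↔
      (∀ i, 0 ≤ reorientSign R A i * eraseCoord R e z i) ∧ 0 ≤ reorientSign R A e * z e := by
    refine ⟨fun h => ⟨fun i => ?_, h e⟩, fun h i => ?_⟩
    all_goals rcases eq_or_ne i e with rfl | hi
    · simp
    · simpa [eraseCoord_of_ne hi] using h i
    · exact h.2
    · simpa [eraseCoord_of_ne hi] using h.1 i
  rw [IsLeadOf, IsLeadOf, hnonneg, hlt, eraseCoord_of_ne ha.ne]
  tauto

lemma ActivityDescends.isActive_iff_vanishingOn (h : ActivityDescends Z e A) (ha : a < e) :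
    IsActive Z A a ↔ IsActive (vanishingOn Z {e}) A a :=
  ⟨h a ha, IsActive.mono vanishingOn_le⟩

end Activity

section OrderedField

variable {𝕜 ι : Type*} [Field 𝕜] [LinearOrder 𝕜] [IsStrictOrderedRing 𝕜] [LinearOrder ι]
  {Z Y : Submodule 𝕜 (ι → 𝕜)} {A B C : Finset ι} {a b e : ι} {z : ι → 𝕜}

lemma IsLeadOf.sign_mul_pos (h : IsLeadOf A a z) : 0 < reorientSign 𝕜 A a * z a :=
  (h.1 a).lt_of_ne' <| mul_ne_zero (reorientSign_ne_zero A a) h.2.1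

lemma isActive_iff_single_mem (hZ : ∀ z ∈ Z, ∀ i > e, z i = 0) :
    IsActive Z A e ↔ Pi.single e 1 ∈ Z := by
  constructor
  · rintro ⟨z, hz, -, hze, hlt⟩
    have hz_eq : z = z e • Pi.single e 1 := by
      rw [← sub_eq_zero, ← eraseCoord_eq_sub]
      ext i
      rcases lt_trichotomy i e with hi | rfl | hi
      · rw [eraseCoord_of_ne hi.ne, hlt i hi, Pi.zero_apply]
      · simp
      · rw [eraseCoord_of_ne hi.ne', hZ z hz i hi, Pi.zero_apply]
    exact (Z.smul_mem_iff hze).1 (hz_eq ▸ hz)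
  · intro h
    refine ⟨reorientSign 𝕜 A e • Pi.single e 1, Z.smul_mem _ h, fun i => ?_, ?_, fun i hi => ?_⟩
    · rcases eq_or_ne i e with rfl | hi
      · simp [reorientSign_mul_self]
      · simp [hi]
    · simpa using reorientSign_ne_zero A e
    · simp [hi.ne]

lemma isActive_vanishingOn_or_of_le (h : symmDiff B C = {e}) (hae : a ≠ e) (hab : a ≤ b)
    (hB : IsActive Z B a) (hC : IsActive Z C b) :
    IsActive (vanishingOn Z {e}) B a ∨ IsActive (vanishingOn Z {e}) C b := by
  obtain ⟨z, hz, hlead⟩ := hB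
  obtain ⟨y, hy, hlead'⟩ := hC
  by_cases hye : y e = 0
  · exact Or.inr ⟨y, by simp [hy, hye], hlead'⟩
  -- `z` and `y` have opposite signs at `e`, so `|y e| • z + |z e| • y` vanishes there.
  set p := reorientSign 𝕜 C e * y e
  set q := reorientSign 𝕜 B e * z e
  have hp : 0 < p := (hlead'.1 e).lt_of_ne' <| mul_ne_zero (reorientSign_ne_zero C e) hye
  have hq : 0 ≤ q := hlead.1 e
  have hw : (p • z + q • y) e = 0 := by
    simp only [Pi.add_apply, Pi.smul_apply, smul_eq_mul, p, q, reorientSign_eq_neg h]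
    ring
  have hsign (i : ι) (hi : i ≠ e) : reorientSign 𝕜 B i * (p • z + q • y) i =
      p * (reorientSign 𝕜 B i * z i) + q * (reorientSign 𝕜 C i * y i) := by
    rw [← reorientSign_eq_of_ne h hi]
    simp only [Pi.add_apply, Pi.smul_apply, smul_eq_mul]
    ring
  refine Or.inl ⟨p • z + q • y,
    mem_vanishingOn.2 ⟨Z.add_mem (Z.smul_mem p hz) (Z.smul_mem q hy), by simpa using hw⟩,
    fun i => ?_, fun hwa => ?_, fun i hi => ?_⟩
  · rcases eq_or_ne i e with rfl | hi
    · rw [hw, mul_zero]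
    · rw [hsign i hi]
      exact add_nonneg (mul_nonneg hp.le (hlead.1 i)) (mul_nonneg hq (hlead'.1 i))
  · have hpos := add_pos_of_pos_of_nonneg (mul_pos hp hlead.sign_mul_pos)
      (mul_nonneg hq (hlead'.1 a))
    rw [← hsign a hae, hwa, mul_zero] at hpos
    exact hpos.false
  · simp [hlead.2.2 i hi, hlead'.2.2 i (hi.trans_le hab)]

lemma IsPerspective.isActive_vanishingOn_or [Fintype ι] (h : IsPerspective Z Y) (e : ι)
    (hZ : IsActive Z A a) (hY : IsActive Y A b) :
    IsActive (vanishingOn Z {e}) A a ∨ IsActive (vanishingOn Y {e}) A b := by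
  obtain ⟨z, hz, hlead⟩ := hZ
  obtain ⟨y, hy, hlead'⟩ := hY
  have hnonneg (i : ι) : 0 ≤ z i * y i := by
    have : z i * y i = reorientSign 𝕜 A i * z i * (reorientSign 𝕜 A i * y i) := by
      rw [mul_mul_mul_comm, reorientSign_mul_self, one_mul]
    exact this ▸ mul_nonneg (hlead.1 i) (hlead'.1 i)
  have hze : z e * y e = 0 :=
    (Finset.sum_eq_zero_iff_of_nonneg fun i _ => hnonneg i).1 (h z hz y hy) e (Finset.mem_univ e)
  exact (mul_eq_zero.1 hze).imp (fun hze => ⟨z, by simp [hz, hze], hlead⟩)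
    fun hye => ⟨y, by simp [hy, hye], hlead'⟩

lemma activityDescends_or_of_symmDiff (h : symmDiff B C = {e}) :
    ActivityDescends Z e B ∨ ActivityDescends Z e C := by
  by_contra! hnot
  simp only [ActivityDescends, not_forall] at hnot
  obtain ⟨⟨a, ha, haB, hna⟩, b, hb, hbC, hnb⟩ := hnot
  rcases le_total a b with hab | hba
  · exact (isActive_vanishingOn_or_of_le h ha.ne hab haB hbC).elim hna hnb
  · exact (isActive_vanishingOn_or_of_le (symmDiff_comm B C ▸ h) hb.ne hba hbC haB).elim hnb hna

lemma IsPerspective.activityDescends_or [Fintype ι] (h : IsPerspective Z Y) (e : ι)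
    (A : Finset ι) : ActivityDescends Z e A ∨ ActivityDescends Y e A := by
  by_contra! hnot
  simp only [ActivityDescends, not_forall] at hnot
  obtain ⟨⟨a, -, haZ, hna⟩, b, -, hbY, hnb⟩ := hnot
  exact (h.isActive_vanishingOn_or e haZ hbY).elim hna hnb

lemma IsPerspective.activityDescends_and_or_and [Fintype ι] (hZY : IsPerspective Z Y)
    (h : symmDiff B C = {e}) :
    ActivityDescends Z e B ∧ ActivityDescends Y e C ∨
      ActivityDescends Z e C ∧ ActivityDescends Y e B := by
  have hZ : ActivityDescends Z e B ∨ ActivityDescends Z e C := activityDescends_or_of_symmDiff h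
  have hY : ActivityDescends Y e B ∨ ActivityDescends Y e C := activityDescends_or_of_symmDiff h
  have hB := hZY.activityDescends_or e B
  have hC := hZY.activityDescends_or e C
  tauto

lemma ActivityDescends.isActive_iff_map_eraseCoord (h : symmDiff B C = {e})
    (hB : ActivityDescends Z e B) (ha : a < e) :
    IsActive Z C a ↔ IsActive (Z.map (eraseCoord 𝕜 e)) C a := by
  constructor
  · rintro ⟨z, hz, hlead⟩
    exact ⟨_, ⟨z, hz, rfl⟩, ((isLeadOf_iff_eraseCoord ha).1 hlead).1⟩
  rintro ⟨_, ⟨z, hz, rfl⟩, hlead⟩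
  rcases le_total 0 (reorientSign 𝕜 C e * z e) with hC | hC
  · exact ⟨z, hz, (isLeadOf_iff_eraseCoord ha).2 ⟨hlead, hC⟩⟩
  · -- The preimage `z` is nonnegative on `B` instead, where it can be made to vanish at `e`.
    have hleadB : IsLeadOf B a (eraseCoord 𝕜 e z) := (isLeadOf_congr h eraseCoord_self).2 hlead
    have hsign : 0 ≤ reorientSign 𝕜 B e * z e := by
      rwa [reorientSign_eq_neg h, neg_mul, neg_nonneg]
    have hdel : IsActive (vanishingOn Z {e}) B a :=
      hB a ha ⟨z, hz, (isLeadOf_iff_eraseCoord ha).2 ⟨hleadB, hsign⟩⟩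
    exact ((isActive_congr h (by simp)).1 hdel).mono vanishingOn_le

end OrderedField

section ActivityMonomial

variable {R ι M : Type*} [Ring R] [LinearOrder R] [LinearOrder ι] [CommMonoid M]
  {Z : Submodule R (ι → R)} {B C : Finset ι} {e : ι}

/-- The monomial `x ^ θ * u ^ θ̄`, where `θ` and `θ̄` count the active elements of `Z` reoriented
on `A` that lie outside `A` and in `A`. -/
noncomputable def activityMonomial (x u : M) (Z : Submodule R (ι → R)) (A : Finset ι) : M :=
  x ^ {a | a ∉ A ∧ IsActive Z A a}.ncard * u ^ {a | a ∈ A ∧ IsActive Z A a}.ncard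

lemma activityMonomial_congr (x u : M) (h : symmDiff B C = {e}) (hZ : ∀ z ∈ Z, z e = 0) :
    activityMonomial x u Z B = activityMonomial x u Z C := by
  have hmem (a : ι) (ha : IsActive Z C a) : a ∈ B ↔ a ∈ C := by
    have : a ∉ symmDiff B C := by
      rw [h, Finset.mem_singleton]
      rintro rfl
      exact not_isActive hZ ha
    grind [Finset.mem_symmDiff]
  simp only [activityMonomial, isActive_congr h hZ, and_congr_left (hmem _),
    and_congr_left fun ha => not_congr (hmem _ ha)]

lemma activityMonomial_vanishingOn_congr (x u : M) (Z : Submodule R (ι → R))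
    (h : symmDiff B C = {e}) :
    activityMonomial x u (vanishingOn Z {e}) B = activityMonomial x u (vanishingOn Z {e}) C :=
  activityMonomial_congr x u h (apply_eq_zero_of_mem_vanishingOn_singleton (.inl rfl))

lemma activityMonomial_map_eraseCoord_congr (x u : M) (Z : Submodule R (ι → R))
    (h : symmDiff B C = {e}) :
    activityMonomial x u (Z.map (eraseCoord R e)) B =
      activityMonomial x u (Z.map (eraseCoord R e)) C :=
  activityMonomial_congr x u h (apply_eq_zero_of_mem_map_eraseCoord (.inl rfl))

open Classical in
lemma activityMonomial_eq_prod [Fintype ι] (x u : M) (Z : Submodule R (ι → R)) (A : Finset ι) :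
    activityMonomial x u Z A =
      ∏ a, if IsActive Z A a then if a ∈ A then u else x else 1 := by
  have hpow (p : ι → Prop) (x : M) : x ^ {a | p a}.ncard = ∏ a, if p a then x else 1 := by
    rw [Finset.prod_ite, Finset.prod_const, Finset.prod_const_one, mul_one,
      Set.ncard_eq_toFinset_card', Set.toFinset_ofPred]
  rw [activityMonomial, hpow, hpow, ← Finset.prod_mul_distrib]
  refine Finset.prod_congr rfl fun a _ => ?_
  by_cases a ∈ A <;> simp [*]

end ActivityMonomial

section ActivityRecursion

variable {𝕜 ι M : Type*} [Field 𝕜] [LinearOrder 𝕜] [IsStrictOrderedRing 𝕜]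
  [LinearOrder ι] [CommMonoid M] {Z Z' : Submodule 𝕜 (ι → 𝕜)} {B C : Finset ι} {e : ι}

open Classical in
lemma activityMonomial_eq_mul [Finite ι] (x u : M) (hZ : ∀ z ∈ Z, ∀ i > e, z i = 0)
    (hZ' : ∀ z ∈ Z', ∀ i ≥ e, z i = 0) (h : ∀ a < e, IsActive Z B a ↔ IsActive Z' B a) :
    activityMonomial x u Z B =
      (if Pi.single e 1 ∈ Z then if e ∈ B then u else x else 1) *
        activityMonomial x u Z' B := by
  cases nonempty_fintype ι
  rw [activityMonomial_eq_prod, activityMonomial_eq_prod,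
    ← Finset.mul_prod_erase _ _ (Finset.mem_univ e),
    ← Finset.mul_prod_erase _ _ (Finset.mem_univ e), if_congr (isActive_iff_single_mem hZ) rfl rfl,
    if_neg (not_isActive fun z hz => hZ' z hz e le_rfl), one_mul]
  congr 1
  refine Finset.prod_congr rfl fun a ha => if_congr ?_ rfl rfl
  rcases (Finset.ne_of_mem_erase ha).lt_or_gt with hae | hea
  · exact h a hae
  · exact iff_of_false (not_isActive fun z hz => hZ z hz a hea)
      (not_isActive fun z hz => hZ' z hz a hea.le)

open Classical in
lemma ActivityDescends.activityMonomial_eq_vanishingOn [Finite ι] (x u : M)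
    (hZ : ∀ z ∈ Z, ∀ i > e, z i = 0) (hB : ActivityDescends Z e B) :
    activityMonomial x u Z B =
      (if Pi.single e 1 ∈ Z then if e ∈ B then u else x else 1) *
        activityMonomial x u (vanishingOn Z {e}) B := by
  refine activityMonomial_eq_mul x u hZ (fun z hz i hi => ?_) fun a => hB.isActive_iff_vanishingOn
  exact apply_eq_zero_of_mem_vanishingOn_singleton
    (hi.eq_or_lt.imp Eq.symm fun hi z hz => hZ z hz i hi) z hz

open Classical in
lemma ActivityDescends.activityMonomial_eq_map_eraseCoord [Finite ι] (x u : M)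
    (hZ : ∀ z ∈ Z, ∀ i > e, z i = 0) (h : symmDiff B C = {e}) (hB : ActivityDescends Z e B) :
    activityMonomial x u Z C =
      (if Pi.single e 1 ∈ Z then if e ∈ C then u else x else 1) *
        activityMonomial x u (Z.map (eraseCoord 𝕜 e)) C := by
  refine activityMonomial_eq_mul x u hZ (fun z hz i hi => ?_)
    fun a => hB.isActive_iff_map_eraseCoord h
  exact apply_eq_zero_of_mem_map_eraseCoord
    (hi.eq_or_lt.imp Eq.symm fun hi z hz => hZ z hz i hi) z hz

variable {R : Type*} [CommRing R] {Y : Submodule 𝕜 (ι → 𝕜)}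

open Classical in
lemma IsPerspective.activityMonomial_add_of_activityDescends [Fintype ι]
    (hZY : IsPerspective Z Y) (x u y w : R) (hZ : ∀ z ∈ Z, ∀ i > e, z i = 0)
    (hY : ∀ z ∈ Y, ∀ i > e, z i = 0) (h : symmDiff B C = {e}) (hB : ActivityDescends Z e B)
    (hC : ActivityDescends Y e C) :
    activityMonomial x u Y B * activityMonomial y w Z B +
        activityMonomial x u Y C * activityMonomial y w Z C =
      (if Pi.single e 1 ∈ Y then x + u - 1 else 1) *
          (activityMonomial x u (Y.map (eraseCoord 𝕜 e)) B *
            activityMonomial y w (vanishingOn Z {e}) B) +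
        (if Pi.single e 1 ∈ Z then y + w - 1 else 1) *
          (activityMonomial x u (vanishingOn Y {e}) B *
            activityMonomial y w (Z.map (eraseCoord 𝕜 e)) B) := by
  have hCB : symmDiff C B = {e} := symmDiff_comm B C ▸ h
  have he : e ∈ B ∧ e ∉ C ∨ e ∈ C ∧ e ∉ B := Finset.mem_symmDiff.1 (by simp [h])
  rw [hB.activityMonomial_eq_vanishingOn y w hZ, hC.activityMonomial_eq_map_eraseCoord x u hY hCB,
    hB.activityMonomial_eq_map_eraseCoord y w hZ h, hC.activityMonomial_eq_vanishingOn x u hY]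
  simp only [activityMonomial_vanishingOn_congr _ _ _ hCB,
    activityMonomial_map_eraseCoord_congr _ _ _ hCB]
  by_cases hsY : Pi.single e 1 ∈ Y
  · have hsZ : Pi.single e 1 ∉ Z := fun hsZ => by simpa using hZY.apply_eq_zero hsY _ hsZ
    rw [hZY.map_eraseCoord_eq hsY, map_eraseCoord_eq_vanishingOn hsY]
    rcases he with ⟨he, he'⟩ | ⟨he, he'⟩ <;>
      simp only [hsY, hsZ, he, he', if_true, if_false] <;> ring
  by_cases hsZ : Pi.single e 1 ∈ Z
  · rw [hZY.symm.map_eraseCoord_eq hsZ, map_eraseCoord_eq_vanishingOn hsZ]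
    rcases he with ⟨he, he'⟩ | ⟨he, he'⟩ <;>
      simp only [hsY, hsZ, he, he', if_true, if_false] <;> ring
  · simp only [hsY, hsZ, if_false, one_mul]

open Classical in
lemma IsPerspective.activityMonomial_add_insert [Fintype ι] (hZY : IsPerspective Z Y)
    (x u y w : R) (hZ : ∀ z ∈ Z, ∀ i > e, z i = 0) (hY : ∀ z ∈ Y, ∀ i > e, z i = 0)
    {A : Finset ι} (he : e ∉ A) :
    activityMonomial x u Y A * activityMonomial y w Z A +
        activityMonomial x u Y (insert e A) * activityMonomial y w Z (insert e A) =
      (if Pi.single e 1 ∈ Y then x + u - 1 else 1) *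
          (activityMonomial x u (Y.map (eraseCoord 𝕜 e)) A *
            activityMonomial y w (vanishingOn Z {e}) A) +
        (if Pi.single e 1 ∈ Z then y + w - 1 else 1) *
          (activityMonomial x u (vanishingOn Y {e}) A *
            activityMonomial y w (Z.map (eraseCoord 𝕜 e)) A) := by
  have h : symmDiff A (insert e A) = {e} := by
    ext i
    rw [Finset.mem_symmDiff]
    grind
  have h' : symmDiff (insert e A) A = {e} := symmDiff_comm A (insert e A) ▸ h
  rcases hZY.activityDescends_and_or_and h with ⟨hA, hC⟩ | ⟨hC, hA⟩
  · exact hZY.activityMonomial_add_of_activityDescends x u y w hZ hY h hA hC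
  · have := hZY.activityMonomial_add_of_activityDescends x u y w hZ hY h' hC hA
    simpa only [activityMonomial_vanishingOn_congr _ _ _ h',
      activityMonomial_map_eraseCoord_congr _ _ _ h', add_comm] using this

end ActivityRecursion

section CorankNullity

variable {𝕜 ι R : Type*} [Field 𝕜] [CommSemiring R]

/-- The summand `s ^ (r'(E) - r'(A)) * t ^ (|A| - r(A))` of the Tutte polynomial at `z = 1` of the
perspective with dependencies `Z` and functionals `Y`: the corank of `A` in `M'` is the dimension
of the functionals vanishing on `A`, and its nullity in `M` that of the dependencies supported
in `A`. -/
noncomputable def corankNullityMonomial (s t : R) (Z Y : Submodule 𝕜 (ι → 𝕜)) (A : Finset ι) : R :=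
  s ^ Module.finrank 𝕜 (vanishingOn Y ↑A) * t ^ Module.finrank 𝕜 (vanishingOn Z (↑A)ᶜ)

variable [Finite ι] [DecidableEq ι]

open Classical in
lemma corankNullityMonomial_eq_mul (s t : R) (Z Y : Submodule 𝕜 (ι → 𝕜)) {A : Finset ι} {e : ι}
    (he : e ∉ A) :
    corankNullityMonomial s t Z Y A =
      (if Pi.single e 1 ∈ Y then s else 1) *
        corankNullityMonomial s t (vanishingOn Z {e}) (Y.map (eraseCoord 𝕜 e)) A := by
  have hY := finrank_vanishingOn_diff_singleton Y ↑A e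
  have hZ := vanishingOn_insert Z e (↑A)ᶜ
  rw [Set.sdiff_singleton_eq_self (by simpa using he)] at hY
  rw [Set.insert_eq_of_mem (by simpa using he)] at hZ
  rw [corankNullityMonomial, corankNullityMonomial, hY, hZ]
  split_ifs <;> simp [pow_succ', mul_assoc]

open Classical in
lemma corankNullityMonomial_insert_eq_mul (s t : R) (Z Y : Submodule 𝕜 (ι → 𝕜)) (A : Finset ι)
    (e : ι) :
    corankNullityMonomial s t Z Y (insert e A) =
      (if Pi.single e 1 ∈ Z then t else 1) *
        corankNullityMonomial s t (Z.map (eraseCoord 𝕜 e)) (vanishingOn Y {e}) A := by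
  have hcompl : (↑(insert e A) : Set ι)ᶜ = (↑A)ᶜ \ {e} := by
    ext; simp [and_comm]
  rw [corankNullityMonomial, corankNullityMonomial, hcompl,
    finrank_vanishingOn_diff_singleton Z, Finset.coe_insert, vanishingOn_insert Y]
  split_ifs <;> simp [pow_succ', mul_left_comm]

open Classical in
lemma sum_powerset_insert_corankNullityMonomial (s t : R) (Z Y : Submodule 𝕜 (ι → 𝕜))
    {S : Finset ι} {e : ι} (he : e ∉ S) :
    ∑ A ∈ (insert e S).powerset, corankNullityMonomial s t Z Y A =
      (if Pi.single e 1 ∈ Y then s else 1) * ∑ A ∈ S.powerset,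
          corankNullityMonomial s t (vanishingOn Z {e}) (Y.map (eraseCoord 𝕜 e)) A +
        (if Pi.single e 1 ∈ Z then t else 1) * ∑ A ∈ S.powerset,
          corankNullityMonomial s t (Z.map (eraseCoord 𝕜 e)) (vanishingOn Y {e}) A := by
  rw [Finset.sum_powerset_insert he, Finset.mul_sum, Finset.mul_sum]
  congr 1
  · exact Finset.sum_congr rfl fun A hA => corankNullityMonomial_eq_mul s t Z Y fun heA =>
      he (Finset.mem_powerset.1 hA heA)
  · exact Finset.sum_congr rfl fun A _ => corankNullityMonomial_insert_eq_mul s t Z Y A e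

end CorankNullity

section General

variable {𝕜 ι R : Type*} [Field 𝕜] [LinearOrder 𝕜] [IsStrictOrderedRing 𝕜] [Fintype ι]
  [LinearOrder ι] [CommRing R] {Z Y : Submodule 𝕜 (ι → 𝕜)}

open Classical in
lemma IsPerspective.sum_powerset_insert_activityMonomial (h : IsPerspective Z Y) (x u y w : R)
    {S : Finset ι} {e : ι} (hZ : ∀ z ∈ Z, ∀ i > e, z i = 0) (hY : ∀ z ∈ Y, ∀ i > e, z i = 0)
    (he : e ∉ S) :
    ∑ A ∈ (insert e S).powerset, activityMonomial x u Y A * activityMonomial y w Z A =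
      (if Pi.single e 1 ∈ Y then x + u - 1 else 1) * ∑ A ∈ S.powerset,
          activityMonomial x u (Y.map (eraseCoord 𝕜 e)) A *
            activityMonomial y w (vanishingOn Z {e}) A +
        (if Pi.single e 1 ∈ Z then y + w - 1 else 1) * ∑ A ∈ S.powerset,
          activityMonomial x u (vanishingOn Y {e}) A *
            activityMonomial y w (Z.map (eraseCoord 𝕜 e)) A := by
  rw [Finset.sum_powerset_insert he, Finset.mul_sum, Finset.mul_sum, ← Finset.sum_add_distrib,
    ← Finset.sum_add_distrib]
  exact Finset.sum_congr rfl fun A hA => h.activityMonomial_add_insert x u y w hZ hY fun heA =>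
    he (Finset.mem_powerset.1 hA heA)

lemma IsPerspective.sum_powerset_corankNullityMonomial (h : IsPerspective Z Y) (x u y w : R)
    (S : Finset ι) (hZ : ∀ z ∈ Z, ∀ i ∉ S, z i = 0) (hY : ∀ z ∈ Y, ∀ i ∉ S, z i = 0) :
    ∑ A ∈ S.powerset, corankNullityMonomial (x + u - 1) (y + w - 1) Z Y A =
      ∑ A ∈ S.powerset, activityMonomial x u Y A * activityMonomial y w Z A := by
  induction S using Finset.induction_on_max generalizing Z Y with
  | empty =>
    obtain rfl : Z = ⊥ := (Submodule.eq_bot_iff Z).2 fun z hz => funext fun i => hZ z hz i (by simp)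
    obtain rfl : Y = ⊥ := (Submodule.eq_bot_iff Y).2 fun z hz => funext fun i => hY z hz i (by simp)
    have hrank (B : Set ι) : Module.finrank 𝕜 (vanishingOn (⊥ : Submodule 𝕜 (ι → 𝕜)) B) = 0 := by
      rw [vanishingOn, bot_inf_eq, finrank_bot]
    have hact (a : ι) : ¬IsActive (⊥ : Submodule 𝕜 (ι → 𝕜)) ∅ a := not_isActive (by simp)
    simp [corankNullityMonomial, activityMonomial, hrank, hact]
  | insert e S hlt ih =>
    have hgt (i : ι) (hi : i > e) : i ∉ insert e S := by
      rw [Finset.mem_insert, not_or]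
      exact ⟨hi.ne', fun hiS => (hlt i hiS).not_gt hi⟩
    have hsupp {Z : Submodule 𝕜 (ι → 𝕜)} (hZ : ∀ z ∈ Z, ∀ i ∉ insert e S, z i = 0) (i : ι)
        (hi : i ∉ S) : i = e ∨ ∀ z ∈ Z, z i = 0 :=
      (eq_or_ne i e).imp_right fun hie z hz => hZ z hz i (by simp [hie, hi])
    have hvan {Z : Submodule 𝕜 (ι → 𝕜)} (hZ : ∀ z ∈ Z, ∀ i ∉ insert e S, z i = 0) :
        ∀ z ∈ vanishingOn Z {e}, ∀ i ∉ S, z i = 0 := fun z hz i hi =>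
      apply_eq_zero_of_mem_vanishingOn_singleton (hsupp hZ i hi) z hz
    have hmap {Z : Submodule 𝕜 (ι → 𝕜)} (hZ : ∀ z ∈ Z, ∀ i ∉ insert e S, z i = 0) :
        ∀ z ∈ Z.map (eraseCoord 𝕜 e), ∀ i ∉ S, z i = 0 := fun z hz i hi =>
      apply_eq_zero_of_mem_map_eraseCoord (hsupp hZ i hi) z hz
    have he : e ∉ S := fun he => (hlt e he).false
    rw [sum_powerset_insert_corankNullityMonomial _ _ Z Y he,
      h.sum_powerset_insert_activityMonomial x u y w (fun z hz i hi => hZ z hz i (hgt i hi))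
        (fun z hz i hi => hY z hz i (hgt i hi)) he,
      ih (h.vanishingOn_map_eraseCoord e) (hvan hZ) (hmap hY),
      ih (h.symm.vanishingOn_map_eraseCoord e).symm (hmap hZ) (hvan hY)]

theorem statement13_general (h : IsPerspective Z Y) (x u y w : R) :
    ∑ A : Finset ι, corankNullityMonomial (x + u - 1) (y + w - 1) Z Y A =
      ∑ A : Finset ι, activityMonomial x u Y A * activityMonomial y w Z A := by
  simpa using h.sum_powerset_corankNullityMonomial x u y w Finset.univ (by simp) (by simp)

end General

section Configuration

variable {𝕜 ι V W : Type*} [Field 𝕜] [AddCommGroup V] [Module 𝕜 V] [AddCommGroup W] [Module 𝕜 W]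

/-- The space of values on the configuration `v` of the linear functionals. -/
def covectors (𝕜 : Type*) {ι V : Type*} [Field 𝕜] [AddCommGroup V] [Module 𝕜 V] (v : ι → V) :
    Submodule 𝕜 (ι → 𝕜) :=
  LinearMap.range (LinearMap.pi fun i => Module.Dual.eval 𝕜 V (v i))

@[simp]
lemma mem_covectors {v : ι → V} {y : ι → 𝕜} :
    y ∈ covectors 𝕜 v ↔ ∃ f : V →ₗ[𝕜] 𝕜, (fun i => f (v i)) = y := Iff.rfl

lemma vanishingOn_covectors (v : ι → V) (B : Set ι) :
    vanishingOn (covectors 𝕜 v) B = covectors 𝕜 ((span 𝕜 (v '' B)).mkQ ∘ v) := by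
  ext y
  simp only [mem_vanishingOn, mem_covectors, Function.comp_apply]
  constructor
  · rintro ⟨⟨f, rfl⟩, hf⟩
    have hker : span 𝕜 (v '' B) ≤ LinearMap.ker f := by
      rw [Submodule.span_le, Set.image_subset_iff]
      exact hf
    exact ⟨(span 𝕜 (v '' B)).liftQ f hker, funext fun i => Submodule.liftQ_apply ..⟩
  · rintro ⟨f, rfl⟩
    refine ⟨⟨f ∘ₗ (span 𝕜 (v '' B)).mkQ, rfl⟩, fun i hi => ?_⟩
    have : (span 𝕜 (v '' B)).mkQ (v i) = 0 := by
      rw [Submodule.mkQ_apply, Submodule.Quotient.mk_eq_zero]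
      exact Submodule.subset_span ⟨i, hi, rfl⟩
    simp only [this, map_zero]

lemma finrank_covectors [Finite ι] (v : ι → V) :
    Module.finrank 𝕜 (covectors 𝕜 v) = Module.finrank 𝕜 (span 𝕜 (Set.range v)) := by
  cases nonempty_fintype ι
  have : (Fintype.linearCombination 𝕜 v).dualMap =
      ((Pi.basisFun 𝕜 ι).constr 𝕜).toLinearMap ∘ₗ
        LinearMap.pi fun i => Module.Dual.eval 𝕜 V (v i) := by
    classical
    ext f i
    simp [Pi.single_apply]
  rw [← Fintype.range_linearCombination, ← LinearMap.finrank_range_dualMap_eq_finrank_range, this,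
    LinearMap.range_comp]
  exact (LinearEquiv.finrank_map_eq _ _).symm

lemma finrank_vanishingOn_covectors [Finite ι] (v : ι → V) (B : Set ι) :
    Module.finrank 𝕜 (vanishingOn (covectors 𝕜 v) B) + Module.finrank 𝕜 (span 𝕜 (v '' B)) =
      Module.finrank 𝕜 (span 𝕜 (Set.range v)) := by
  have := Module.Finite.span_of_finite 𝕜 (Set.finite_range v)
  rw [vanishingOn_covectors, finrank_covectors, Set.range_comp, Submodule.span_image,
    ← finrank_map_add_finrank_inf_ker (span 𝕜 (v '' B)).mkQ (span 𝕜 (Set.range v)),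
    Submodule.ker_mkQ, inf_eq_right.2 (Submodule.span_mono (Set.image_subset_range v B))]

variable [Fintype ι]

/-- The space of linear dependencies of the configuration `v`. -/
def dependencies (𝕜 : Type*) {ι V : Type*} [Field 𝕜] [AddCommGroup V] [Module 𝕜 V] [Fintype ι]
    (v : ι → V) : Submodule 𝕜 (ι → 𝕜) :=
  LinearMap.ker (Fintype.linearCombination 𝕜 v)

@[simp]
lemma mem_dependencies {v : ι → V} {z : ι → 𝕜} :
    z ∈ dependencies 𝕜 v ↔ ∑ i, z i • v i = 0 := Iff.rfl

lemma isPerspective_dependencies_covectors (v : ι → V) (π : V →ₗ[𝕜] W) :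
    IsPerspective (dependencies 𝕜 v) (covectors 𝕜 (π ∘ v)) := by
  rintro z hz _ ⟨f, rfl⟩
  calc ∑ i, z i * f (π (v i)) = f (π (∑ i, z i • v i)) := by simp
    _ = 0 := by rw [mem_dependencies.1 hz, map_zero, map_zero]

lemma finrank_vanishingOn_dependencies (v : ι → V) (A : Finset ι) :
    Module.finrank 𝕜 (vanishingOn (dependencies 𝕜 v) (↑A)ᶜ) +
      Module.finrank 𝕜 (span 𝕜 (v '' A)) = A.card := by
  classical
  have hmap : (Pi.spanSubset 𝕜 (A : Set ι)).map (Fintype.linearCombination 𝕜 v) =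
      span 𝕜 (v '' A) := by
    rw [Pi.spanSubset, Submodule.map_span, Set.image_image]
    simp
  have hvan : vanishingOn (dependencies 𝕜 v) (↑A)ᶜ =
      Pi.spanSubset 𝕜 (A : Set ι) ⊓ LinearMap.ker (Fintype.linearCombination 𝕜 v) := by
    ext z
    simp only [mem_vanishingOn, Submodule.mem_inf, Pi.mem_spanSubset_iff]
    exact and_comm
  rw [hvan, ← hmap, add_comm, finrank_map_add_finrank_inf_ker, Pi.dim_spanSubset,
    Set.ncard_coe_finset]

end Configuration

section RealConfiguration

variable {n : ℕ} {V W : Type*} [AddCommGroup V] [Module ℝ V] [AddCommGroup W] [Module ℝ W]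
  {A : Finset (Fin n)} {a : Fin n}

lemma reorient_apply (v : Fin n → V) (A : Finset (Fin n)) (i : Fin n) :
    reorient v A i = reorientSign ℝ A i • v i := by
  unfold reorient reorientSign
  split_ifs <;> simp

lemma isActive_dependencies (v : Fin n → V) :
    IsActive (dependencies ℝ v) A a ↔ OActive (reorient v A) a := by
  constructor
  · rintro ⟨z, hz, hlead⟩
    refine ⟨fun i => reorientSign ℝ A i * z i, hlead.1, ?_, hlead.sign_mul_pos,
      fun i hi => mul_eq_zero_of_right _ (hlead.2.2 i hi)⟩
    simpa only [reorient_apply, smul_smul, mul_comm _ (reorientSign ℝ A _),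
      reorientSign_mul_cancel_left] using mem_dependencies.1 hz
  · rintro ⟨c, hc, hsum, hca, hlt⟩
    refine ⟨fun i => reorientSign ℝ A i * c i, ?_, fun i => ?_,
      mul_ne_zero (reorientSign_ne_zero A a) hca.ne',
      fun i hi => mul_eq_zero_of_right _ (hlt i hi)⟩
    · simpa only [reorient_apply, smul_smul, mul_comm, mem_dependencies] using hsum
    · exact (reorientSign_mul_cancel_left A i (c i)).symm ▸ hc i

lemma isActive_covectors (v : Fin n → V) :
    IsActive (covectors ℝ v) A a ↔ ODualActive (reorient v A) a := by
  have hf (f : V →ₗ[ℝ] ℝ) (i : Fin n) : f (reorient v A i) = reorientSign ℝ A i * f (v i) := by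
    rw [reorient_apply, map_smul, smul_eq_mul]
  constructor
  · rintro ⟨_, ⟨f, rfl⟩, hlead⟩
    exact ⟨f, fun i => hf f i ▸ hlead.1 i, hf f a ▸ hlead.sign_mul_pos,
      fun i hi => (hf f i).trans (mul_eq_zero_of_right _ (hlead.2.2 i hi))⟩
  · rintro ⟨f, hnonneg, hpos, hlt⟩
    simp only [hf, mul_eq_zero, reorientSign_ne_zero, false_or] at hnonneg hpos hlt
    exact ⟨_, ⟨f, rfl⟩, hnonneg, right_ne_zero_of_mul hpos.ne', hlt⟩

lemma activityMonomial_dependencies (v : Fin n → V) (y w : ℝ) (A : Finset (Fin n)) :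
    activityMonomial y w (dependencies ℝ v) A = y ^ theta v A * w ^ thetaBar v A := by
  simp only [activityMonomial, isActive_dependencies, theta, thetaBar]

lemma activityMonomial_covectors (v : Fin n → V) (x u : ℝ) (A : Finset (Fin n)) :
    activityMonomial x u (covectors ℝ v) A = x ^ thetaStar v A * u ^ thetaStarBar v A := by
  simp only [activityMonomial, isActive_covectors, thetaStar, thetaStarBar]

lemma tuttePerspV_eq_sum_corankNullityMonomial (v : Fin n → V) (v' : Fin n → W) (x y : ℝ) :
    tuttePerspV v v' x y = ∑ A : Finset (Fin n),
      corankNullityMonomial (x - 1) (y - 1) (dependencies ℝ v) (covectors ℝ v') A := by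
  refine Finset.sum_congr rfl fun A _ => ?_
  have hcorank := finrank_vanishingOn_covectors (𝕜 := ℝ) v' A
  have hnullity := finrank_vanishingOn_dependencies (𝕜 := ℝ) v A
  rw [corankNullityMonomial, vrank, vrank, vrank, Set.image_univ, ← hcorank, ← hnullity,
    Nat.add_sub_cancel, Nat.add_sub_cancel]

end RealConfiguration

/-- 4-variable expansion for oriented matroid perspectives (realizable case):
`t(M,M'; x+u, y+w, 1) = ∑_A x^θ*_{M'}(A) · u^θ̄*_{M'}(A) · y^θ_M(A) · w^θ̄_M(A)`. -/
theorem statement13 {n : ℕ} {V W : Type*} [AddCommGroup V] [Module ℝ V] [FiniteDimensional ℝ V]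
    [AddCommGroup W] [Module ℝ W] [FiniteDimensional ℝ W]
    (v : Fin n → V) (π : V →ₗ[ℝ] W) (x u y w : ℝ) :
    tuttePerspV v (π ∘ v) (x + u) (y + w) =
      ∑ A : Finset (Fin n),
        x ^ thetaStar (π ∘ v) A * u ^ thetaStarBar (π ∘ v) A *
          y ^ theta v A * w ^ thetaBar v A := by
  rw [tuttePerspV_eq_sum_corankNullityMonomial,
    statement13_general (isPerspective_dependencies_covectors v π)]
  simp only [activityMonomial_covectors, activityMonomial_dependencies, mul_assoc]
end
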